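/- arXiv:1611.06960 — 13 statements merged into one kernel-verified Lean document; each statement's English description precedes it below -/
import Mathlib

section
/- Let X be a d-dimensional real normed vector space and let F be a non-empty subset of X with Assouad dimension equal to d. Then the closed unit ball B(0,1) is a weak tangent to F: there exists a sequence of similarity maps T_k : X → X such that the Hausdorff distance between T_k(F) ∩ B(0,1) and B(0,1) tends to 0 as k → ∞. -/
/-!
If the unit ball is not a weak tangent to `F`, then `F` is uniformly porous: for some `ε > 0`,
every ball of radius `R` contains a ball of radius `ε R` missing `F`
(`exists_porosity_of_not_isWeakTangent`). Fix linear coordinates on `X` and cut a half-open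
coordinate cube into `n ^ d` congruent subcubes. When `n` is large compared with `1 / ε`, one of
the subcubes lies inside a hole and can be discarded. Iterating, the part of `F` in a cube of side
`r` is covered by `(n ^ d - 1) ^ m` cubes of side `r / n ^ m` (`exists_cubes_cover`). Hence the
Assouad dimension of `F` is at most `log (n ^ d - 1) / log n < d`.
-/

open Set Metric Filter

/-- The Assouad dimension of a set in a (pseudo)metric space: the infimum of all `s ≥ 0`
for which there is a constant `C > 0` such that for all `0 < r < R` and all `x ∈ F`,
the set `B(x,R) ∩ F` can be covered by at most `C * (R/r)^s` sets of diameter at most `r`. -/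
noncomputable def assouadDim {X : Type*} [PseudoMetricSpace X] (F : Set X) : ℝ :=
  sInf {s : ℝ | 0 ≤ s ∧ ∃ C : ℝ, 0 < C ∧ ∀ R : ℝ, 0 < R → ∀ r : ℝ, 0 < r → r < R →
    ∀ x ∈ F, ∃ N : ℕ, ∃ U : Fin N → Set X,
      (Metric.closedBall x R ∩ F ⊆ ⋃ i, U i) ∧
      (∀ i, EMetric.diam (U i) ≤ ENNReal.ofReal r) ∧
      (N : ℝ) ≤ C * (R / r) ^ s}

/-- A similarity map: a bijection scaling all distances by a fixed constant `c > 0`. -/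
def IsSimilarity {X : Type*} [NormedAddCommGroup X] (T : X → X) : Prop :=
  Function.Bijective T ∧ ∃ c : ℝ, 0 < c ∧ ∀ x y : X, ‖T x - T y‖ = c * ‖x - y‖

/-- `E` is a weak tangent to `F`: `E` is compact, contained in the closed unit ball, and
there is a sequence of similarity maps `T k` with `d_H(E, T k (F) ∩ B(0,1)) → 0`. -/
def IsWeakTangent {X : Type*} [NormedAddCommGroup X] (E F : Set X) : Prop :=
  IsCompact E ∧ E ⊆ Metric.closedBall 0 1 ∧
  ∃ T : ℕ → X → X, (∀ k, IsSimilarity (T k)) ∧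
    Filter.Tendsto
      (fun k => EMetric.hausdorffEdist E ((T k '' F) ∩ Metric.closedBall 0 1))
      Filter.atTop (nhds 0)

/-- The arithmetic patch of size `k`, scale `δ` and translate `t`, with respect to
the vectors `e i`. -/
def arithmeticPatch {X : Type*} [AddCommGroup X] [Module ℝ X] {d : ℕ}
    (e : Fin d → X) (k : ℕ) (δ : ℝ) (t : X) : Set X :=
  {p | ∃ x : Fin d → ℕ, (∀ i, x i < k) ∧ p = t + δ • ∑ i, (x i : ℝ) • e i}

/-- `F` asymptotically contains arbitrarily large arithmetic patches w.r.t. the basis `e`. -/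
def AsympContainsAP {X : Type*} [NormedAddCommGroup X] [Module ℝ X] {d : ℕ}
    (e : Fin d → X) (F : Set X) : Prop :=
  ∀ k : ℕ, ∀ ε : ℝ, 0 < ε → ∃ δ : ℝ, 0 < δ ∧ ∃ t : X, ∃ E : Set X, E ⊆ F ∧
    EMetric.hausdorffEdist E (arithmeticPatch e k δ t) ≤ ENNReal.ofReal (ε * δ)

/-- `F` satisfies the asymptotic Steinhaus property. -/
def AsympSteinhaus {X : Type*} [NormedAddCommGroup X] [Module ℝ X] (F : Set X) : Prop :=
  ∀ P : Set X, P.Finite → ∀ ε : ℝ, 0 < ε → ∃ δ : ℝ, 0 < δ ∧ ∃ t : X, ∃ E : Set X, E ⊆ F ∧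
    EMetric.hausdorffEdist E ((fun p => t + δ • p) '' P) ≤ ENNReal.ofReal (ε * δ)

/-- An arithmetic progression in `ℝ` of length `k`, gap `δ`, starting at `t`. -/
def arithmeticProgression (k : ℕ) (δ t : ℝ) : Set ℝ :=
  {y : ℝ | ∃ x : ℕ, x < k ∧ y = t + δ * x}

/-- The half-open cube of side `r` with lower corner `a`, in the coordinates `φ`. Half-open cubes
subdivide exactly. -/
def coordCube {X : Type*} [AddCommGroup X] [Module ℝ X] {d : ℕ} (φ : X ≃ₗ[ℝ] (Fin d → ℝ))
    (a : Fin d → ℝ) (r : ℝ) : Set X :=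
  {x | ∀ i, a i ≤ φ x i ∧ φ x i < a i + r}

/-- `F` leaves in every closed ball of radius `R` a closed subball of radius `ε * R` empty. -/
def IsPorous {X : Type*} [NormedAddCommGroup X] (ε : ℝ) (F : Set X) : Prop :=
  ∀ (c : X) (R : ℝ), 0 < R → ∃ y : X, ∀ z : X, ‖z - y‖ ≤ ε * R → ‖z - c‖ ≤ R ∧ z ∉ F

section

variable {X : Type*} [NormedAddCommGroup X] [NormedSpace ℝ X]

theorem isSimilarity_smul_sub (c : X) {R : ℝ} (hR : 0 < R) :
    IsSimilarity (fun x : X => R⁻¹ • (x - c)) := by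
  refine ⟨⟨fun x y hxy => ?_, fun y => ⟨c + R • y, ?_⟩⟩, R⁻¹, inv_pos.2 hR, fun x y => ?_⟩
  · have := smul_right_injective X (inv_pos.2 hR).ne' hxy
    simpa using this
  · simp [smul_smul, hR.ne']
  · rw [← smul_sub, norm_smul, Real.norm_of_nonneg (inv_pos.2 hR).le]
    simp

/-- Applying a similarity taking `B(c, R)` to the unit ball shows that a set far from having the
unit ball as a weak tangent has a hole in `B(c, R)`. -/
theorem exists_porosity_of_not_isWeakTangent [FiniteDimensional ℝ X] {F : Set X}
    (h : ¬ IsWeakTangent (closedBall (0 : X) 1) F) : ∃ ε : ℝ, 0 < ε ∧ IsPorous ε F := by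
  -- Failure of all sequences of similarities gives one `ε` that works for all of them.
  obtain ⟨ε, hε, hT⟩ : ∃ ε : ℝ, 0 < ε ∧ ∀ T : X → X, IsSimilarity T →
      ENNReal.ofReal ε <
        hausdorffEDist (closedBall (0 : X) 1) ((T '' F) ∩ closedBall 0 1) := by
    by_contra! hcon
    refine h ⟨isCompact_closedBall 0 1, subset_rfl, ?_⟩
    choose T hT hle using fun k : ℕ => hcon (1 / ((k : ℝ) + 1)) Nat.one_div_pos_of_nat
    refine ⟨T, hT, tendsto_of_tendsto_of_tendsto_of_le_of_le tendsto_const_nhds ?_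
      (fun _ => zero_le) hle⟩
    have := ENNReal.tendsto_ofReal (tendsto_one_div_add_atTop_nhds_zero_nat (𝕜 := ℝ))
    simpa using this
  obtain ⟨η, hη, hη1, hηε⟩ : ∃ η : ℝ, 0 < η ∧ η ≤ 1 ∧ 2 * η ≤ ε :=
    ⟨min 1 (ε / 2), by positivity, min_le_left _ _, by linarith [min_le_right 1 (ε / 2)]⟩
  refine ⟨η, hη, fun c R hR => ?_⟩
  obtain ⟨y, hy, hyF⟩ : ∃ y : X, ‖y‖ ≤ 1 ∧
      ∀ z ∈ F, ‖z - c‖ ≤ R → ε < ‖y - R⁻¹ • (z - c)‖ := by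
    by_contra! hcon
    refine (hT _ (isSimilarity_smul_sub c hR)).not_ge
      (hausdorffEDist_le_of_mem_edist (fun y hy => ?_) fun y hy => ⟨y, hy.2, by simp⟩)
    obtain ⟨z, hzF, hz, hle⟩ := hcon y (by simpa using hy)
    refine ⟨_, ⟨mem_image_of_mem _ hzF, ?_⟩, ?_⟩
    · rw [mem_closedBall_zero_iff, norm_smul, Real.norm_of_nonneg (inv_pos.2 hR).le,
        inv_mul_le_iff₀ hR]
      simpa using hz
    · rw [edist_dist, dist_eq_norm]
      exact ENNReal.ofReal_le_ofReal hle
  -- Pulling `y` towards the centre keeps the hole inside the ball.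
  refine ⟨c + R • ((1 - η) • y), fun z hz => ?_⟩
  have hzc : ‖z - c‖ ≤ R := by
    have h1 : z - c = (z - (c + R • ((1 - η) • y))) + R • ((1 - η) • y) := by abel
    have h2 : ‖R • ((1 - η) • y)‖ ≤ R * (1 - η) := by
      rw [norm_smul, norm_smul, Real.norm_of_nonneg hR.le, Real.norm_of_nonneg (by linarith)]
      have : (1 - η) * ‖y‖ ≤ (1 - η) * 1 := mul_le_mul_of_nonneg_left hy (by linarith)
      nlinarith
    rw [h1]
    refine (norm_add_le _ _).trans ?_
    linarith
  refine ⟨hzc, fun hzF => (hyF z hzF hzc).not_ge ?_⟩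
  have h1 : y - R⁻¹ • (z - c) = η • y - R⁻¹ • (z - (c + R • ((1 - η) • y))) := by
    rw [← sub_sub, smul_sub _ (z - c), smul_smul R⁻¹ R, inv_mul_cancel₀ hR.ne']
    module
  have h2 : ‖η • y‖ ≤ η := by
    rw [norm_smul, Real.norm_of_nonneg hη.le]
    nlinarith
  have h3 : ‖R⁻¹ • (z - (c + R • ((1 - η) • y)))‖ ≤ η := by
    rw [norm_smul, Real.norm_of_nonneg (inv_pos.2 hR).le, inv_mul_le_iff₀ hR]
    linarith
  rw [h1]
  refine (norm_sub_le _ _).trans ?_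
  linarith

/-- Some subcube in the `n`-fold subdivision of a cube lies inside a hole of `F`, provided `n` is
large. The constants `M` and `K` compare the norm of `X` with the coordinates. -/
theorem exists_cubes_cover_step {d : ℕ} (φ : X ≃ₗ[ℝ] (Fin d → ℝ)) {M K ε : ℝ} (hM0 : 0 < M)
    (hM : ∀ x i, |φ x i| ≤ M * ‖x‖)
    (hK : ∀ x r, 0 ≤ r → (∀ i, |φ x i| ≤ r) → ‖x‖ ≤ K * r) (hε : 0 < ε) {F : Set X}
    (hF : IsPorous ε F) {n : ℕ} (hn : 0 < n) (hnK : 4 * M * K ≤ ε * n)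
    (a : Fin d → ℝ) {r : ℝ} (hr : 0 < r) :
    ∃ S : Finset (Fin d → ℝ), S.card ≤ n ^ d - 1 ∧
      coordCube φ a r ∩ F ⊆ ⋃ a' ∈ S, coordCube φ a' (r / n) := by
  classical
  have hn' : (0 : ℝ) < n := by exact_mod_cast hn
  -- the lower corners of the subcubes
  let g : (Fin d → Fin n) → (Fin d → ℝ) := fun k i => a i + (k i : ℕ) * (r / n)
  have hsub : ∀ x ∈ coordCube φ a r, ∃ k, x ∈ coordCube φ (g k) (r / n) := by
    intro x hx
    have hrn : 0 < r / n := by positivity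
    have hlt : ∀ i, ⌊(φ x i - a i) / (r / n)⌋₊ < n := fun i => by
      rw [Nat.floor_lt (div_nonneg (by linarith [(hx i).1]) hrn.le), div_lt_iff₀ hrn,
        mul_div_cancel₀ _ hn'.ne']
      linarith [(hx i).2]
    refine ⟨fun i => ⟨_, hlt i⟩, fun i => ?_⟩
    have h1 := Nat.floor_le (div_nonneg (sub_nonneg.2 (hx i).1) hrn.le)
    have h2 := Nat.lt_floor_add_one ((φ x i - a i) / (r / n))
    rw [le_div_iff₀ hrn] at h1
    rw [div_lt_iff₀ hrn] at h2
    simp only [g]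
    constructor <;> linarith
  obtain ⟨k₀, hk₀⟩ : ∃ k₀, coordCube φ (g k₀) (r / n) ∩ F = ∅ := by
    -- A ball of radius `r / (4 * M)` about the centre of the cube stays inside the cube.
    set c : X := φ.symm (fun i => a i + r / 2) with hc
    obtain ⟨y, hy⟩ := hF c (r / (4 * M)) (by positivity)
    have hyc : y ∈ coordCube φ a r := by
      have h1 := (hy y (by simp; positivity)).1
      intro i
      have h2 : |φ (y - c) i| ≤ r / 4 := by
        refine (hM _ i).trans ((mul_le_mul_of_nonneg_left h1 hM0.le).trans_eq ?_)
        field_simp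
      have h3 : φ (y - c) i = φ y i - (a i + r / 2) := by simp [hc]
      rw [h3, abs_le] at h2
      constructor <;> linarith [h2.1, h2.2]
    obtain ⟨k₀, hk₀⟩ := hsub y hyc
    refine ⟨k₀, eq_empty_iff_forall_notMem.2 fun z hz => (hy z ?_).2 hz.2⟩
    refine (hK (z - y) (r / n) (by positivity) fun i => ?_).trans ?_
    · rw [map_sub, Pi.sub_apply, abs_le]
      constructor <;> linarith [(hk₀ i).1, (hk₀ i).2, (hz.1 i).1, (hz.1 i).2]
    · rw [← mul_div_assoc, ← mul_div_assoc, div_le_div_iff₀ hn' (by positivity)]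
      nlinarith
  refine ⟨(Finset.univ.erase k₀).image g, ?_, ?_⟩
  · refine Finset.card_image_le.trans ?_
    rw [Finset.card_erase_of_mem (Finset.mem_univ _)]
    simp
  · rintro x ⟨hx, hxF⟩
    obtain ⟨k, hk⟩ := hsub x hx
    have hne : k ≠ k₀ := by
      rintro rfl
      exact (eq_empty_iff_forall_notMem.1 hk₀ x) ⟨hk, hxF⟩
    simp only [mem_iUnion]
    exact ⟨g k, Finset.mem_image_of_mem _ (by simp [hne]), hk⟩

/-- Iteration of the one-generation cover: `m` generations multiply the bound `q` `m` times. -/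
theorem exists_cubes_cover {d : ℕ} (φ : X ≃ₗ[ℝ] (Fin d → ℝ)) {F : Set X} {n q : ℕ} (hn : 0 < n)
    (hstep : ∀ (a : Fin d → ℝ) (r : ℝ), 0 < r → ∃ S : Finset (Fin d → ℝ), S.card ≤ q ∧
      coordCube φ a r ∩ F ⊆ ⋃ a' ∈ S, coordCube φ a' (r / n))
    (a : Fin d → ℝ) {r : ℝ} (hr : 0 < r) (m : ℕ) :
    ∃ S : Finset (Fin d → ℝ), S.card ≤ q ^ m ∧
      coordCube φ a r ∩ F ⊆ ⋃ a' ∈ S, coordCube φ a' (r / (n : ℝ) ^ m) := by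
  classical
  induction m with
  | zero => exact ⟨{a}, by simp, by simp⟩
  | succ m ih =>
    obtain ⟨S, hS, hcov⟩ := ih
    have hn' : (0 : ℝ) < n := by exact_mod_cast hn
    choose G hG hGcov using fun a' => hstep a' (r / (n : ℝ) ^ m) (by positivity)
    refine ⟨S.biUnion G, ?_, fun x hx => ?_⟩
    · rw [pow_succ]
      exact (Finset.card_biUnion_le_card_mul _ _ _ fun a' _ => hG a').trans
        (Nat.mul_le_mul_right _ hS)
    · have h1 := hcov hx
      simp only [mem_iUnion] at h1
      obtain ⟨a', ha', hxa'⟩ := h1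
      have h2 := hGcov a' ⟨hxa', hx.2⟩
      simp only [mem_iUnion] at h2
      obtain ⟨b, hb, hxb⟩ := h2
      rw [div_div, ← pow_succ] at hxb
      simp only [mem_iUnion]
      exact ⟨b, Finset.mem_biUnion.2 ⟨a', ha', hb⟩, hxb⟩

theorem exists_coordinates [FiniteDimensional ℝ X] {d : ℕ} (hd : Module.finrank ℝ X = d) :
    ∃ (φ : X ≃ₗ[ℝ] (Fin d → ℝ)) (M K : ℝ), 1 ≤ M ∧ 1 ≤ K ∧ (∀ x i, |φ x i| ≤ M * ‖x‖) ∧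
      ∀ x r, 0 ≤ r → (∀ i, |φ x i| ≤ r) → ‖x‖ ≤ K * r := by
  let φ : X ≃ₗ[ℝ] (Fin d → ℝ) := LinearEquiv.ofFinrankEq _ _ (by simp [hd])
  let L := φ.toContinuousLinearEquiv
  refine ⟨φ, ‖(L : X →L[ℝ] (Fin d → ℝ))‖ + 1, ‖(L.symm : (Fin d → ℝ) →L[ℝ] X)‖ + 1,
    by simp, by simp, fun x i => ?_, fun x r hr hx => ?_⟩
  · have h1 : |φ x i| ≤ ‖L x‖ := norm_le_pi_norm (L x) i
    have h2 := (L : X →L[ℝ] (Fin d → ℝ)).le_opNorm x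
    have h3 := norm_nonneg x
    simp only [ContinuousLinearEquiv.coe_coe] at h2
    linarith
  · have h1 : ‖L x‖ ≤ r := (pi_norm_le_iff_of_nonneg hr).2 hx
    have h2 := (L.symm : (Fin d → ℝ) →L[ℝ] X).le_opNorm (L x)
    simp only [ContinuousLinearEquiv.coe_coe, ContinuousLinearEquiv.symm_apply_apply] at h2
    have h3 := mul_le_mul_of_nonneg_left h1 (norm_nonneg (L.symm : (Fin d → ℝ) →L[ℝ] X))
    linarith

theorem IsPorous.assouadDim_lt [FiniteDimensional ℝ X] {d : ℕ} (hd : Module.finrank ℝ X = d)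
    (hd0 : 0 < d) {F : Set X} {ε : ℝ} (hε : 0 < ε) (hF : IsPorous ε F) : assouadDim F < d := by
  obtain ⟨φ, M, K, hM1, hK1, hM, hK⟩ := exists_coordinates (X := X) hd
  have hM0 : 0 < M := by linarith
  have hK0 : 0 < K := by linarith
  obtain ⟨n, hn2, hnK⟩ : ∃ n : ℕ, 2 ≤ n ∧ 4 * M * K ≤ ε * n := by
    obtain ⟨n, hn⟩ := exists_nat_ge (4 * M * K / ε)
    refine ⟨n + 2, by omega, ?_⟩
    rw [div_le_iff₀ hε] at hn
    push_cast
    nlinarith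
  have hn1 : (1 : ℝ) < n := by exact_mod_cast hn2
  have hn0 : (0 : ℝ) < n := by linarith
  obtain ⟨q, hq⟩ : ∃ q : ℕ, n ^ d - 1 = q := ⟨_, rfl⟩
  have hnd : 2 ≤ n ^ d := hn2.trans (Nat.le_self_pow hd0.ne' n)
  have hq1 : (1 : ℝ) ≤ q := by exact_mod_cast (show 1 ≤ q by omega)
  have hqlt : (q : ℝ) < (n : ℝ) ^ d := by exact_mod_cast (show q < n ^ d by omega)
  have hq0 : (0 : ℝ) < q := by linarith
  set s : ℝ := Real.logb n q with hs
  have hs0 : 0 ≤ s := Real.logb_nonneg hn1 hq1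
  have hsd : s < d := by
    rw [hs, Real.logb_lt_iff_lt_rpow hn1 hq0, Real.rpow_natCast]
    exact hqlt
  have hns : (n : ℝ) ^ s = q := Real.rpow_logb hn0 hn1.ne' hq0
  refine lt_of_le_of_lt (csInf_le ⟨0, fun _ ht => ht.1⟩ ?_) hsd
  refine ⟨hs0, q * (4 * M * K) ^ s, by positivity, fun R hR r hr hrR x _ => ?_⟩
  have hA : 1 ≤ 4 * M * K := by nlinarith
  -- `m + 1` is the first generation whose cubes have diameter at most `r`.
  obtain ⟨m, hm, hm'⟩ := exists_nat_pow_near (x := 4 * M * K * (R / r)) (y := (n : ℝ))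
    (one_le_mul_of_one_le_of_one_le hA ((one_le_div hr).2 hrR.le)) hn1
  obtain ⟨S, hS, hcov⟩ := exists_cubes_cover φ (F := F) (q := q) (by omega : 0 < n)
    (fun a r hr => hq ▸ exists_cubes_cover_step φ hM0 hM hK hε hF (by omega) hnK a hr)
    (fun i => φ x i - 2 * M * R) (r := 4 * M * R) (by positivity) (m + 1)
  refine ⟨S.card, fun j => coordCube φ (S.equivFin.symm j : Fin d → ℝ)
    (4 * M * R / (n : ℝ) ^ (m + 1)), fun z hz => ?_, fun j => ?_, ?_⟩
  · have hzc : z ∈ coordCube φ (fun i => φ x i - 2 * M * R) (4 * M * R) := by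
      intro i
      have h1 := hM (z - x) i
      have h2 : M * ‖z - x‖ ≤ M * R :=
        mul_le_mul_of_nonneg_left (by simpa [dist_eq_norm] using hz.1) hM0.le
      have h3 : 0 < M * R := by positivity
      rw [map_sub, Pi.sub_apply, abs_le] at h1
      constructor <;> linarith [h1.1, h1.2]
    have h1 := hcov ⟨hzc, hz.2⟩
    simp only [mem_iUnion] at h1 ⊢
    obtain ⟨a, ha, hza⟩ := h1
    exact ⟨S.equivFin ⟨a, ha⟩, by simpa using hza⟩
  · refine ediam_le fun y hy z hz => ?_
    rw [edist_dist, dist_eq_norm]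
    refine ENNReal.ofReal_le_ofReal
      ((hK _ (4 * M * R / (n : ℝ) ^ (m + 1)) (by positivity) fun i => ?_).trans ?_)
    · rw [map_sub, Pi.sub_apply, abs_le]
      constructor <;> linarith [(hy i).1, (hy i).2, (hz i).1, (hz i).2]
    · rw [← mul_div_assoc, div_le_iff₀ (by positivity)]
      rw [← mul_div_assoc, div_lt_iff₀ hr] at hm'
      linarith
  · calc (S.card : ℝ) ≤ (q : ℝ) ^ (m + 1) := by exact_mod_cast hS
      _ = q * ((n : ℝ) ^ m) ^ s := by
        rw [pow_succ', ← Real.rpow_natCast (n : ℝ) m, ← Real.rpow_mul hn0.le, mul_comm (m : ℝ),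
          Real.rpow_mul hn0.le, hns, Real.rpow_natCast]
      _ ≤ q * (4 * M * K * (R / r)) ^ s := by gcongr
      _ = q * (4 * M * K) ^ s * (R / r) ^ s := by
        rw [Real.mul_rpow (by positivity) (by positivity), mul_assoc (q : ℝ)]

end

/-- If `F` is a non-empty subset of a `d`-dimensional real normed space with Assouad
dimension equal to `d`, then the closed unit ball is a weak tangent to `F`. -/
theorem unitBall_isWeakTangent_of_assouad_eq_dim {X : Type*} [NormedAddCommGroup X]
    [NormedSpace ℝ X] [FiniteDimensional ℝ X] {d : ℕ} (hd : Module.finrank ℝ X = d)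
    (F : Set X) (hF : F.Nonempty) (h : assouadDim F = d) :
    IsWeakTangent (Metric.closedBall (0 : X) 1) F := by
  by_contra hcon
  obtain ⟨ε, hε, hpor⟩ := exists_porosity_of_not_isWeakTangent hcon
  rcases Nat.eq_zero_or_pos d with rfl | hd0
  · -- In dimension zero the only non-empty set is the whole space, which has no holes.
    have : Subsingleton X := Module.finrank_zero_iff.1 hd
    obtain ⟨x, hx⟩ := hF
    obtain ⟨y, hy⟩ := hpor x 1 one_pos
    exact (hy x (by simp [Subsingleton.elim x y, hε.le])).2 hx
  · exact (hpor.assouadDim_lt hd hd0 hε).ne h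
end

section
/- Let X be a d-dimensional real normed vector space and let F be a non-empty subset of X such that the closed unit ball B(0,1) is a weak tangent to F. Then F satisfies the asymptotic Steinhaus property: for every finite set P ⊆ X and every ε > 0, there exist δ > 0, t ∈ X, and a subset E ⊆ F such that the Hausdorff distance between E and t + δP is at most εδ. -/
/-!
Since the unit ball is a weak tangent, some similarity `T` of ratio `c` carries `F` to a set that
is `ε * η`-dense in the unit ball, where `η > 0` is chosen with `η • P` inside the unit ball. Let
`t = T⁻¹ 0` and `δ = η / c`. Then `‖T (t + δ • p)‖ = c * δ * ‖p‖ = η * ‖p‖ ≤ 1` for `p ∈ P`, so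
`T (t + δ • p)` is within `ε * η` of `T f` for some `f ∈ F`; dividing by `c`, the point `f` is
within `ε * δ` of `t + δ • p`. The set `E` consists of one such `f` for each `p`. Only the scaling
of distances under `T` is used, so no appeal to the Mazur–Ulam theorem is needed.
-/

open Set Metric Filter

/-- If the closed unit ball is a weak tangent to a non-empty subset `F` of a
`d`-dimensional real normed space, then `F` satisfies the asymptotic Steinhaus property. -/
theorem asympSteinhaus_of_unitBall_weakTangent {X : Type*} [NormedAddCommGroup X]
    [NormedSpace ℝ X] [FiniteDimensional ℝ X] {d : ℕ} (hd : Module.finrank ℝ X = d)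
    (F : Set X) (hF : F.Nonempty)
    (h : IsWeakTangent (Metric.closedBall (0 : X) 1) F) :
    AsympSteinhaus F := by
  obtain ⟨-, -, T, hT, hlim⟩ := h
  intro P hP ε hε
  obtain ⟨M, hM⟩ := hP.isBounded.exists_norm_le
  -- the radius `η` is small enough that `η • P` lies in the unit ball
  obtain ⟨η, hη, hηP⟩ : ∃ η : ℝ, 0 < η ∧ ∀ p ∈ P, η * ‖p‖ ≤ 1 := by
    refine ⟨(|M| + 1)⁻¹, by positivity, fun p hp => ?_⟩
    rw [inv_mul_le_one₀ (by positivity)]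
    linarith [hM p hp, le_abs_self M]
  obtain ⟨k, hk⟩ := (hlim.eventually_lt_const
    (ENNReal.ofReal_pos.2 (mul_pos hε hη))).exists
  obtain ⟨⟨-, hsurj⟩, c, hc, hTc⟩ := hT k
  obtain ⟨t, ht⟩ := hsurj 0
  have hclose : ∀ p ∈ P, ∃ f ∈ F, edist (t + (η / c) • p) f ≤ ENNReal.ofReal (ε * (η / c)) := by
    intro p hp
    have hmem : T k (t + (η / c) • p) ∈ closedBall (0 : X) 1 := by
      have h1 := hTc (t + (η / c) • p) t
      rw [ht, sub_zero, add_sub_cancel_left, norm_smul, Real.norm_of_nonneg (by positivity),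
        ← mul_assoc, mul_div_cancel₀ _ hc.ne'] at h1
      simpa [h1] using hηP p hp
    obtain ⟨_, ⟨⟨f, hf, rfl⟩, -⟩, hlt⟩ := exists_edist_lt_of_hausdorffEDist_lt hmem hk
    refine ⟨f, hf, ?_⟩
    rw [edist_dist, ENNReal.ofReal_lt_ofReal_iff (by positivity), dist_eq_norm, hTc] at hlt
    rw [edist_dist, dist_eq_norm]
    apply ENNReal.ofReal_le_ofReal
    rw [← mul_div_assoc, le_div_iff₀ hc]
    linarith
  choose! g hgF hg using hclose
  refine ⟨η / c, div_pos hη hc, t, g '' P, image_subset_iff.2 hgF, ?_⟩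
  apply hausdorffEDist_le_of_mem_edist
  · rintro _ ⟨p, hp, rfl⟩
    exact ⟨_, mem_image_of_mem _ hp, by rw [edist_comm]; exact hg p hp⟩
  · rintro _ ⟨p, hp, rfl⟩
    exact ⟨_, mem_image_of_mem _ hp, hg p hp⟩
end

section
/- Let X be a d-dimensional real normed vector space and let F be a non-empty subset of X. If F has a weak tangent E ⊆ B(0,1) with non-empty interior, then the Assouad dimension of F equals d. -/
/-!
The Haar measure of a ball of radius `r` in a `d`-dimensional normed space is proportional to
`r ^ d`, and both inequalities follow from comparing volumes.

* Upper bound: an `r / 2`-separated subset of a ball of radius `R` has at most `(5 R / r) ^ d`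
  points (`card_le_of_separated_ball`), because the balls of radius `r / 4` around its points are
  disjoint. A maximal such subset gives a cover by balls of diameter at most `r`
  (`exists_cover_ball`), so the exponent `d` is admissible for every set.
* Lower bound: suppose the exponent `s` is admissible for `F` and `E` contains a ball of radius
  `ρ`. For each `η < ρ`, a similar copy of `F` is `η`-dense in that ball. Covering the relevant
  part of the copy by `N ≤ C (3 ρ / η) ^ s` sets of diameter at most `η` covers the ball by `N`
  balls of radius `2 η`, so `ρ ^ d ≤ N (2 η) ^ d` (`pow_le_of_closedBall_subset`). Letting `η → 0`
  in `(ρ / η) ^ d ≤ C' (ρ / η) ^ s` forces `d ≤ s`.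
-/

open Set Metric Filter

open MeasureTheory Module in
theorem pow_le_of_closedBall_subset {X : Type*} [NormedAddCommGroup X] [NormedSpace ℝ X]
    [FiniteDimensional ℝ X] {N : ℕ} {y : X} {ρ η : ℝ} (hρ : 0 ≤ ρ) (hη : 0 ≤ η) (c : Fin N → X)
    (h : closedBall y ρ ⊆ ⋃ i, closedBall (c i) η) :
    ρ ^ finrank ℝ X ≤ N * η ^ finrank ℝ X := by
  borelize X
  let μ : Measure X := Measure.addHaar
  have h1 : μ.real (closedBall y ρ) ≤ ∑ i, μ.real (closedBall (c i) η) :=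
    (measureReal_mono h
      (Bornology.isBounded_iUnion.2 fun _ => isBounded_closedBall).measure_lt_top.ne).trans
      (measureReal_iUnion_fintype_le _)
  simp only [Measure.addHaar_real_closedBall μ _ hρ, Measure.addHaar_real_closedBall μ _ hη,
    Finset.sum_const, Finset.card_univ, Fintype.card_fin, nsmul_eq_mul, ← mul_assoc] at h1
  exact le_of_mul_le_mul_right h1
    (ENNReal.toReal_pos (measure_ball_pos _ _ zero_lt_one).ne' measure_ball_lt_top.ne)

open MeasureTheory Module in
theorem card_le_of_separated_ball {X : Type*} [NormedAddCommGroup X] [NormedSpace ℝ X]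
    [FiniteDimensional ℝ X] {x : X} {R r : ℝ} (hr : 0 < r) (hrR : r < R) (s : Finset X)
    (hs : ∀ c ∈ s, dist c x ≤ R) (hsep : ∀ a ∈ s, ∀ b ∈ s, a ≠ b → r / 2 < dist a b) :
    (s.card : ℝ) ≤ (5 * (R / r)) ^ finrank ℝ X := by
  borelize X
  let μ : Measure X := Measure.addHaar
  have hD : (s : Set X).PairwiseDisjoint (fun c => closedBall c (r / 4)) := by
    intro a ha b hb hab
    apply closedBall_disjoint_closedBall
    linarith [hsep a ha b hb hab]
  have hsub : (⋃ c ∈ s, closedBall c (r / 4)) ⊆ closedBall x (5 / 4 * R) :=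
    iUnion₂_subset fun c hc => closedBall_subset_closedBall' (by linarith [hs c hc])
  have h1 : ∑ c ∈ s, μ.real (closedBall c (r / 4)) ≤ μ.real (closedBall x (5 / 4 * R)) := by
    rw [← measureReal_biUnion_finset hD (fun c _ => measurableSet_closedBall)
      (fun c _ => measure_closedBall_lt_top.ne)]
    exact measureReal_mono hsub measure_closedBall_lt_top.ne
  simp only [Measure.addHaar_real_closedBall μ _ (show 0 ≤ r / 4 by positivity),
    Measure.addHaar_real_closedBall μ _ (show 0 ≤ 5 / 4 * R by linarith),
    Finset.sum_const, nsmul_eq_mul, ← mul_assoc] at h1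
  have h2 := le_of_mul_le_mul_right h1
    (ENNReal.toReal_pos (measure_ball_pos _ _ zero_lt_one).ne' measure_ball_lt_top.ne)
  rw [← le_div_iff₀ (by positivity), ← div_pow] at h2
  refine h2.trans_eq ?_
  congr 1
  field_simp

open Module in
theorem exists_cover_ball {X : Type*} [NormedAddCommGroup X] [NormedSpace ℝ X]
    [FiniteDimensional ℝ X] (x : X) {R r : ℝ} (hr : 0 < r) (hrR : r < R) :
    ∃ N : ℕ, ∃ U : Fin N → Set X, closedBall x R ⊆ ⋃ i, U i ∧
      (∀ i, ediam (U i) ≤ ENNReal.ofReal r) ∧ (N : ℝ) ≤ (5 * (R / r)) ^ finrank ℝ X := by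
  let ε : NNReal := (r / 2).toNNReal
  have hε : (ε : ℝ) = r / 2 := Real.coe_toNNReal _ (by positivity)
  have hcard : ∀ s : Finset X, (s : Set X) ⊆ closedBall x R → IsSeparated ε (s : Set X) →
      (s.card : ℝ) ≤ (5 * (R / r)) ^ finrank ℝ X := fun s hs hsep =>
    card_le_of_separated_ball hr hrR s (fun c hc => hs hc) fun a ha b hb hab => by
      have : (ε : ENNReal) < edist a b := hsep ha hb hab
      rw [edist_nndist, ENNReal.coe_lt_coe, ← NNReal.coe_lt_coe, coe_nndist, hε] at this
      exact this
  have hpack : packingNumber ε (closedBall x R) ≠ ⊤ := by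
    refine ne_top_of_le_ne_top (ENat.natCast_ne_top ⌊(5 * (R / r)) ^ finrank ℝ X⌋₊)
      (iSup_le fun C => iSup_le fun hC => iSup_le fun hsep => ?_)
    by_contra! hlt
    -- a separated set that is too large, possibly infinite, has a finite subset that is too large
    obtain ⟨t, htC, ht⟩ := exists_subset_encard_eq (Order.add_one_le_of_lt hlt)
    have htfin : t.Finite := finite_of_encard_eq_coe (k := _ + 1) (by exact_mod_cast ht)
    lift t to Finset X using htfin
    have h1 := Nat.le_floor (hcard t (htC.trans hC) (hsep.subset htC))
    rw [encard_coe_eq_coe_finsetCard] at ht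
    have h2 : t.card = ⌊(5 * (R / r)) ^ finrank ℝ X⌋₊ + 1 := by exact_mod_cast ht
    omega
  have hfin : (maximalSeparatedSet ε (closedBall x R)).Finite := by
    rw [← encard_ne_top_iff, encard_maximalSeparatedSet hpack]
    exact hpack
  have hcov := (isCover_maximalSeparatedSet hpack).subset_iUnion_closedBall
  have hcard' := hcard hfin.toFinset (by simpa using maximalSeparatedSet_subset)
    (by simpa using isSeparated_maximalSeparatedSet)
  refine ⟨hfin.toFinset.card, fun i => closedBall (hfin.toFinset.equivFin.symm i : X) ε,
    fun z hz => ?_, fun i => ?_, hcard'⟩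
  · obtain ⟨c, hc, hzc⟩ := mem_iUnion₂.1 (hcov hz)
    refine mem_iUnion.2 ⟨hfin.toFinset.equivFin ⟨c, by simpa using hc⟩, ?_⟩
    simpa using hzc
  · refine ediam_le fun a ha b hb => ?_
    rw [edist_dist]
    apply ENNReal.ofReal_le_ofReal
    rw [mem_closedBall, hε] at ha hb
    linarith [dist_triangle_right a b (hfin.toFinset.equivFin.symm i : X)]

/-- `K * t ^ s` cannot dominate `t ^ d` for large `t` when `s < d`. -/
theorem le_of_pow_le_mul_rpow {d : ℕ} {s K : ℝ}
    (h : ∀ t : ℝ, 1 < t → t ^ d ≤ K * t ^ s) : (d : ℝ) ≤ s := by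
  by_contra! hlt
  have htend := tendsto_rpow_atTop (sub_pos.2 hlt)
  obtain ⟨t, htK, ht⟩ := ((htend.eventually_gt_atTop K).and (eventually_gt_atTop 1)).exists
  have h0 : 0 < t := by linarith
  have := h t ht
  rw [Real.rpow_sub h0, Real.rpow_natCast, lt_div_iff₀ (Real.rpow_pos_of_pos h0 s)] at htK
  linarith

/-- A single step of the lower bound: a cover of the part of `F` near `x` yields, through a
similarity whose image of `F` is `η`-dense in a ball of radius `ρ`, a cover of that ball by balls
of radius `2 η`. -/
theorem pow_le_of_dense_image {X : Type*} [NormedAddCommGroup X] [NormedSpace ℝ X]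
    [FiniteDimensional ℝ X] {F : Set X} {T : X → X} {c : ℝ} (hc : 0 < c)
    (hT : ∀ x y : X, ‖T x - T y‖ = c * ‖x - y‖) {y x : X} {ρ η : ℝ} (hη : 0 < η) (hηρ : η < ρ)
    (hdense : ∀ z ∈ closedBall y ρ, ∃ w ∈ F, dist z (T w) < η) (hx : dist y (T x) < η)
    {N : ℕ} (U : Fin N → Set X) (hcov : closedBall x (3 * ρ / c) ∩ F ⊆ ⋃ i, U i)
    (hdiam : ∀ i, ediam (U i) ≤ ENNReal.ofReal (η / c)) :
    ρ ^ Module.finrank ℝ X ≤ N * (2 * η) ^ Module.finrank ℝ X := by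
  classical
  have hTd : ∀ a b, dist (T a) (T b) = c * dist a b := by simpa only [dist_eq_norm] using hT
  refine pow_le_of_closedBall_subset (y := y) (by linarith) (by linarith)
    (fun i => if h : (U i).Nonempty then T h.some else 0) fun z hz => ?_
  obtain ⟨w, hwF, hzw⟩ := hdense z hz
  have hwx : dist w x ≤ 3 * ρ / c := by
    rw [le_div_iff₀' hc, ← hTd]
    have h1 := dist_triangle4 (T w) z y (T x)
    rw [dist_comm (T w) z] at h1
    linarith [mem_closedBall.1 hz]
  obtain ⟨i, hi⟩ := mem_iUnion.1 (hcov ⟨hwx, hwF⟩)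
  have hne : (U i).Nonempty := ⟨w, hi⟩
  refine mem_iUnion.2 ⟨i, ?_⟩
  rw [dif_pos hne, mem_closedBall]
  have h2 : dist w hne.some ≤ η / c := by
    have := (edist_le_ediam_of_mem hi hne.some_mem).trans (hdiam i)
    rwa [edist_dist, ENNReal.ofReal_le_ofReal_iff (by positivity)] at this
  rw [le_div_iff₀' hc, ← hTd] at h2
  linarith [dist_triangle z (T w) (T hne.some)]

/-- If a non-empty subset `F` of a `d`-dimensional real normed space has a weak tangent
with non-empty interior, then the Assouad dimension of `F` equals `d`. -/
theorem assouad_eq_dim_of_weakTangent_interior {X : Type*} [NormedAddCommGroup X]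
    [NormedSpace ℝ X] [FiniteDimensional ℝ X] {d : ℕ} (hd : Module.finrank ℝ X = d)
    (F : Set X) (hF : F.Nonempty) (E : Set X) (hE : IsWeakTangent E F)
    (hint : (interior E).Nonempty) :
    assouadDim F = d := by
  subst hd
  refine IsLeast.csInf_eq ⟨⟨by positivity, 5 ^ Module.finrank ℝ X, by positivity, ?_⟩, ?_⟩
  · intro R _ r hr hrR x _
    obtain ⟨N, U, hcov, hdiam, hN⟩ := exists_cover_ball x hr hrR
    exact ⟨N, U, inter_subset_left.trans hcov, hdiam, by rwa [Real.rpow_natCast, ← mul_pow]⟩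
  · rintro s ⟨-, C, hC, hs⟩
    obtain ⟨-, -, T, hT, hlim⟩ := hE
    obtain ⟨y, hy⟩ := hint
    obtain ⟨ρ, hρ, hball⟩ := nhds_basis_closedBall.mem_iff.1 (mem_interior_iff_mem_nhds.1 hy)
    refine le_of_pow_le_mul_rpow (K := 2 ^ Module.finrank ℝ X * C * 3 ^ s) fun t ht => ?_
    have ht0 : 0 < t := by linarith
    have hη : 0 < ρ / t := by positivity
    have hηρ : ρ / t < ρ := div_lt_self hρ ht
    obtain ⟨k, hk⟩ := (hlim.eventually_lt_const (ENNReal.ofReal_pos.2 hη)).exists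
    obtain ⟨-, c, hc, hTc⟩ := hT k
    have hdense : ∀ z ∈ closedBall y ρ, ∃ w ∈ F, dist z (T k w) < ρ / t := fun z hz => by
      obtain ⟨_, ⟨⟨w, hw, rfl⟩, -⟩, hzw⟩ := exists_edist_lt_of_hausdorffEDist_lt (hball hz) hk
      rw [edist_dist, ENNReal.ofReal_lt_ofReal_iff hη] at hzw
      exact ⟨w, hw, hzw⟩
    obtain ⟨x, hxF, hx⟩ := hdense y (mem_closedBall_self hρ.le)
    obtain ⟨N, U, hcov, hdiam, hN⟩ := hs (3 * ρ / c) (by positivity) (ρ / t / c) (by positivity)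
      (by gcongr; linarith) x hxF
    have h1 := pow_le_of_dense_image hc hTc hη hηρ hdense hx U hcov hdiam
    have h2 : 3 * ρ / c / (ρ / t / c) = 3 * t := by field_simp
    rw [h2, Real.mul_rpow (by norm_num) ht0.le] at hN
    have h3 : t ^ Module.finrank ℝ X ≤ N * 2 ^ Module.finrank ℝ X := by
      rw [mul_div_assoc', div_pow, mul_pow, ← mul_div_assoc, le_div_iff₀ (by positivity)] at h1
      refine le_of_mul_le_mul_left (a := ρ ^ Module.finrank ℝ X) ?_ (by positivity)
      linarith
    calc t ^ Module.finrank ℝ X ≤ N * 2 ^ Module.finrank ℝ X := h3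
      _ ≤ C * (3 ^ s * t ^ s) * 2 ^ Module.finrank ℝ X := by gcongr
      _ = 2 ^ Module.finrank ℝ X * C * 3 ^ s * t ^ s := by ring
end

section
/- Let X be a d-dimensional real normed vector space, let F ⊆ X be compact and non-empty, and let E ⊆ B(0,1) be a weak tangent to F. Then the Assouad dimension of F is at least the Assouad dimension of E. -/
/-!
Every admissible exponent `s` for `F` is admissible for `E`. To cover `B(x, R) ∩ E` by sets of
diameter at most `r`, take a similarity `T` of ratio `c` for which `T(F) ∩ B(0,1)` is within
`r / 4` of `E`. Then `B(x, R) ∩ E` lies in the `r / 4`-thickening of `T(F ∩ B(y, 2R / c))` for some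
`y ∈ F`. Cover `F ∩ B(y, 2R / c)` by at most `C (4R / r) ^ s` sets of diameter at most `r / (2c)`;
thickening their images under `T` by `r / 4` gives the required cover, with constant `C * 4 ^ s`
(`cover_of_weakTangent`).

Since `sInf ∅ = 0` for real numbers, comparing the two infima also requires some exponent to be
admissible for `F`. Balls in `X` are doubling: compactness of the unit ball covers every ball of
radius `R` by a fixed number of balls of radius `R / 2`, and iterating this `n` times gives a
polynomial bound in `R / r` (`exists_admissible`).
-/


open Set Metric Filter

/-- A finite-dimensional normed space is doubling. -/
lemma exists_doubling (X : Type*) [NormedAddCommGroup X] [NormedSpace ℝ X]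
    [FiniteDimensional ℝ X] :
    ∃ M : ℕ, ∀ R : ℝ, 0 < R → ∀ x : X, ∃ S : Finset X, S.card ≤ M ∧
      closedBall x R ⊆ ⋃ y ∈ S, closedBall y (R / 2) := by
  classical
  have : ProperSpace X := FiniteDimensional.proper ℝ X
  obtain ⟨t, -, htf, ht⟩ := finite_cover_balls_of_compact
    (isCompact_closedBall (0 : X) 1) (e := 1 / 2) (by norm_num)
  refine ⟨htf.toFinset.card, fun R hR x =>
    ⟨htf.toFinset.image (fun y => x + R • y), Finset.card_image_le, fun z hz => ?_⟩⟩
  have hz' : R⁻¹ • (z - x) ∈ closedBall (0 : X) 1 := by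
    rw [mem_closedBall, dist_eq_norm] at hz
    rw [mem_closedBall_zero_iff, norm_smul, norm_inv, Real.norm_of_nonneg hR.le]
    exact inv_mul_le_one_of_le₀ hz hR.le
  obtain ⟨y, hy, hzy⟩ := mem_iUnion₂.1 (ht hz')
  refine mem_iUnion₂.2 ⟨x + R • y, Finset.mem_image_of_mem _ (htf.mem_toFinset.2 hy), ?_⟩
  rw [mem_ball, dist_eq_norm] at hzy
  rw [mem_closedBall, dist_eq_norm]
  have e : z - (x + R • y) = R • (R⁻¹ • (z - x) - y) := by
    rw [smul_sub, smul_inv_smul₀ hR.ne']; abel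
  rw [e, norm_smul, Real.norm_of_nonneg hR.le]
  nlinarith

lemma exists_doubling_pow {X : Type*} [PseudoMetricSpace X] {M : ℕ}
    (hM : ∀ R : ℝ, 0 < R → ∀ x : X, ∃ S : Finset X, S.card ≤ M ∧
      closedBall x R ⊆ ⋃ y ∈ S, closedBall y (R / 2))
    (n : ℕ) {R : ℝ} (hR : 0 < R) (x : X) : ∃ S : Finset X, S.card ≤ M ^ n ∧
      closedBall x R ⊆ ⋃ y ∈ S, closedBall y (R / 2 ^ n) := by
  classical
  induction n with
  | zero => exact ⟨{x}, by simp, by simp⟩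
  | succ n ih =>
    obtain ⟨S, hS, hc⟩ := ih
    choose G hG hGc using hM (R / 2 ^ n) (by positivity)
    refine ⟨S.biUnion G, ?_, fun z hz => ?_⟩
    · refine (Finset.card_biUnion_le_card_mul S G M fun y _ => hG y).trans ?_
      rw [pow_succ]
      gcongr
    · obtain ⟨y, hy, hzy⟩ := mem_iUnion₂.1 (hc hz)
      obtain ⟨w, hw, hzw⟩ := mem_iUnion₂.1 (hGc y hzy)
      refine mem_iUnion₂.2 ⟨w, Finset.mem_biUnion.2 ⟨y, hy, hw⟩, ?_⟩
      rwa [pow_succ, ← div_div]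

/-- Some exponent satisfies the covering bound in the definition of `assouadDim F`, so that the
infimum there is over a non-empty set. -/
lemma exists_admissible {X : Type*} [NormedAddCommGroup X] [NormedSpace ℝ X]
    [FiniteDimensional ℝ X] (F : Set X) :
    ∃ s : ℝ, 0 ≤ s ∧ ∃ C : ℝ, 0 < C ∧ ∀ R : ℝ, 0 < R → ∀ r : ℝ, 0 < r → r < R →
      ∀ x ∈ F, ∃ N : ℕ, ∃ U : Fin N → Set X,
        (closedBall x R ∩ F ⊆ ⋃ i, U i) ∧
        (∀ i, ediam (U i) ≤ ENNReal.ofReal r) ∧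
        (N : ℝ) ≤ C * (R / r) ^ s := by
  obtain ⟨M, hM⟩ := exists_doubling X
  refine ⟨M, by positivity, 4 ^ M, by positivity, fun R hR r hr hrR x _ => ?_⟩
  -- The exponent `s = M` works because `M ≤ 2 ^ M`: with `2R / r < 2 ^ (n + 1) ≤ 4R / r`, balls of
  -- radius `R / 2 ^ (n + 1)` have diameter at most `r`, and `M ^ (n + 1) ≤ (2 ^ (n + 1)) ^ M`.
  obtain ⟨n, hn1, hn2⟩ := exists_nat_pow_near (x := 2 * R / r) (y := 2)
    (by rw [le_div_iff₀ hr]; linarith) one_lt_two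
  obtain ⟨S, hS, hc⟩ := exists_doubling_pow hM (n + 1) hR x
  have hdiam : 2 * (R / 2 ^ (n + 1)) ≤ r := by
    rw [div_lt_iff₀ hr] at hn2
    rw [← mul_div_assoc, div_le_iff₀ (by positivity)]
    linarith
  refine ⟨S.card, fun i => closedBall (S.equivFin.symm i : X) (R / 2 ^ (n + 1)), ?_, ?_, ?_⟩
  · rintro z ⟨hz, -⟩
    obtain ⟨y, hy, hzy⟩ := mem_iUnion₂.1 (hc hz)
    exact mem_iUnion.2 ⟨S.equivFin ⟨y, hy⟩, by simpa using hzy⟩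
  · intro i
    refine ediam_le fun a ha b hb => ?_
    rw [edist_dist]
    refine ENNReal.ofReal_le_ofReal ?_
    have hab := dist_triangle_right a b (S.equivFin.symm i : X)
    rw [mem_closedBall] at ha hb
    linarith
  · rw [Real.rpow_natCast, ← mul_pow]
    calc (S.card : ℝ) ≤ (M : ℝ) ^ (n + 1) := by exact_mod_cast hS
      _ ≤ ((2 : ℝ) ^ M) ^ (n + 1) := by
          gcongr
          exact_mod_cast Nat.lt_two_pow_self.le
      _ = (2 * 2 ^ n) ^ M := by rw [← pow_succ', ← pow_mul, ← pow_mul, mul_comm]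
      _ ≤ (4 * (R / r)) ^ M := by
          refine pow_le_pow_left₀ (by positivity) ?_ M
          linarith [mul_div_assoc 2 R r]

/-- The covering bound for `F` with exponent `s` and constant `C` passes to the weak tangent `E`
with the same exponent and constant `C * 4 ^ s`. -/
lemma cover_of_weakTangent {X : Type*} [NormedAddCommGroup X] {E F : Set X}
    (hE : IsWeakTangent E F) {s C : ℝ}
    (h : ∀ R : ℝ, 0 < R → ∀ r : ℝ, 0 < r → r < R →
      ∀ x ∈ F, ∃ N : ℕ, ∃ U : Fin N → Set X,
        (closedBall x R ∩ F ⊆ ⋃ i, U i) ∧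
        (∀ i, ediam (U i) ≤ ENNReal.ofReal r) ∧
        (N : ℝ) ≤ C * (R / r) ^ s)
    {R r : ℝ} (hr : 0 < r) (hrR : r < R) {x : X} (hx : x ∈ E) :
    ∃ N : ℕ, ∃ U : Fin N → Set X,
      (closedBall x R ∩ E ⊆ ⋃ i, U i) ∧
      (∀ i, ediam (U i) ≤ ENNReal.ofReal r) ∧
      (N : ℝ) ≤ C * 4 ^ s * (R / r) ^ s := by
  obtain ⟨-, -, T, hT, hlim⟩ := hE
  have hR : 0 < R := hr.trans hrR
  have hε : (0 : ENNReal) < ENNReal.ofReal (r / 4) := ENNReal.ofReal_pos.2 (by linarith)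
  obtain ⟨k, hk⟩ := (hlim.eventually (gt_mem_nhds hε)).exists
  obtain ⟨-, c, hc, hTc⟩ := hT k
  have near : ∀ z ∈ E, ∃ y ∈ F, dist z (T k y) < r / 4 := by
    intro z hz
    obtain ⟨_, ⟨⟨y, hy, rfl⟩, -⟩, hzy⟩ := exists_edist_lt_of_hausdorffEDist_lt hz hk
    exact ⟨y, hy, edist_lt_ofReal.1 hzy⟩
  obtain ⟨y, hy, hxy⟩ := near x hx
  obtain ⟨N, U, hU, hUd, hN⟩ := h (2 * R / c) (by positivity) (r / (2 * c)) (by positivity)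
    (by rw [div_lt_div_iff₀ (by positivity) hc]; nlinarith) y hy
  refine ⟨N, fun i => thickening (r / 4) (T k '' U i), ?_, fun i => ?_, ?_⟩
  · rintro z ⟨hzx, hz⟩
    obtain ⟨w, hw, hzw⟩ := near z hz
    have hwy : dist w y ≤ 2 * R / c := by
      rw [le_div_iff₀ hc, mul_comm, dist_eq_norm, ← hTc, ← dist_eq_norm]
      have h1 := dist_triangle4 (T k w) z x (T k y)
      rw [mem_closedBall] at hzx
      rw [dist_comm] at hzw
      linarith
    obtain ⟨i, hi⟩ := mem_iUnion.1 (hU ⟨hwy, hw⟩)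
    exact mem_iUnion.2 ⟨i, mem_thickening_iff.2 ⟨T k w, mem_image_of_mem _ hi, hzw⟩⟩
  · refine ediam_le fun a ha b hb => ?_
    obtain ⟨_, ⟨p, hp, rfl⟩, haa⟩ := mem_thickening_iff.1 ha
    obtain ⟨_, ⟨q, hq, rfl⟩, hbb⟩ := mem_thickening_iff.1 hb
    have h1 : dist p q ≤ r / (2 * c) := by
      rw [← edist_le_ofReal (by positivity)]
      exact (edist_le_ediam_of_mem hp hq).trans (hUd i)
    have h2 : dist (T k p) (T k q) ≤ r / 2 := by
      rw [dist_eq_norm, hTc, ← dist_eq_norm]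
      calc c * dist p q ≤ c * (r / (2 * c)) := by gcongr
        _ = r / 2 := by field_simp
    rw [edist_le_ofReal hr.le]
    have h3 := dist_triangle4 a (T k p) (T k q) b
    rw [dist_comm] at hbb
    linarith
  · have e : 2 * R / c / (r / (2 * c)) = 4 * (R / r) := by field_simp; norm_num
    rwa [e, Real.mul_rpow (by norm_num) (by positivity), ← mul_assoc] at hN

/-- If `F` is a compact non-empty subset of a `d`-dimensional real normed space and
`E` is a weak tangent to `F`, then `dim_A F ≥ dim_A E`. -/
theorem assouadDim_ge_of_weakTangent {X : Type*} [NormedAddCommGroup X]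
    [NormedSpace ℝ X] [FiniteDimensional ℝ X] {d : ℕ} (hd : Module.finrank ℝ X = d)
    (F : Set X) (hFc : IsCompact F) (hF : F.Nonempty) (E : Set X)
    (hE : IsWeakTangent E F) :
    assouadDim E ≤ assouadDim F := by
  refine csInf_le_csInf ⟨0, fun s hs => hs.1⟩ (exists_admissible F) ?_
  rintro s ⟨hs, C, hC, h⟩
  exact ⟨hs, C * 4 ^ s, by positivity, fun R _ r hr hrR x hx => cover_of_weakTangent hE h hr hrR hx⟩
end

section
/- Let F ⊆ ℤ be a set containing at least one non-zero element, regarded as a subset of ℝ. Then the Assouad dimension of F equals 1 if and only if the Assouad dimension of 1/F = {1/n : n ∈ F, n ≠ 0} equals 1. -/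
/-! A subset of `ℝ` has Assouad dimension less than `1` exactly when it is uniformly porous: every
interval of length `L` contains a subinterval of length `c * L` that misses the set, with a fixed
`c > 0` (`exists_mem_exponents_lt_one` and `uniformlyPorous_of_mem_exponents`). Since every
subset of `ℝ` has Assouad dimension at most `1`, dimension `1` means failure of porosity
(`assouadDim_eq_one_iff`).

Uniform porosity passes through `x ↦ 1 / x` (`UniformlyPorous.of_inv_mem`): a quarter of any interval
`I` lies at distance at least its own length from `0`, and there the reciprocal map distorts relative
lengths by a factor of at most `2`, so a hole in the image pulls back to a proportional hole in `I`.
The hole avoids `0`, so the presence of `0` in the set is irrelevant, and the argument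
applies to both directions of the equivalence.

If a set is porous, then for some `M` each interval needs only `M - 1` of its `M` equal parts to
cover the set inside it; iterating gives the exponent `log (M - 1) / log M < 1`. Conversely,
if there are no holes of relative size `1 / (2 * k)` in an interval, then it contains `k` points of
the set that are well separated, which for large `k` contradicts an exponent below `1`. -/

open Set Metric Filter

/-- The exponents admissible in the definition of the Assouad dimension of a subset of `ℝ`. -/
def exponents (A : Set ℝ) : Set ℝ :=
  {s : ℝ | 0 ≤ s ∧ ∃ C : ℝ, 0 < C ∧ ∀ R : ℝ, 0 < R → ∀ r : ℝ, 0 < r → r < R →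
    ∀ x ∈ A, ∃ N : ℕ, ∃ U : Fin N → Set ℝ,
      (Metric.closedBall x R ∩ A ⊆ ⋃ i, U i) ∧
      (∀ i, EMetric.diam (U i) ≤ ENNReal.ofReal r) ∧
      (N : ℝ) ≤ C * (R / r) ^ s}

/-! ### Porosity and reciprocals -/

/-- Every interval of length `L` contains a closed subinterval of length `c * L` disjoint
from `A`. -/
def PorousWith (c : ℝ) (A : Set ℝ) : Prop :=
  ∀ a L : ℝ, 0 < L → ∃ b, a ≤ b ∧ b + c * L ≤ a + L ∧ ∀ x, b ≤ x → x ≤ b + c * L → x ∉ A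

/-- Uniform porosity of a subset of the line, at all locations and all scales. -/
def UniformlyPorous (A : Set ℝ) : Prop := ∃ c : ℝ, 0 < c ∧ PorousWith c A

lemma PorousWith.neg {c : ℝ} {A : Set ℝ} (h : PorousWith c A) : PorousWith c {x | -x ∈ A} := by
  intro a L hL
  obtain ⟨b, h1, h2, h3⟩ := h (-(a + L)) L hL
  refine ⟨-(b + c * L), by linarith, by linarith, fun x hx1 hx2 => h3 (-x) ?_ ?_⟩ <;> linarith

/-- On an interval `[b, b + l]` with `0 < l ≤ b`, a hole of `A` in the reciprocal interval
pulls back to a hole of comparable relative size. -/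
lemma PorousWith.exists_inv_hole {c : ℝ} (hc : 0 < c) {A : Set ℝ} (h : PorousWith c A) {b l : ℝ}
    (hl : 0 < l) (hlb : l ≤ b) :
    ∃ d, b ≤ d ∧ d + c * l / 2 ≤ b + l ∧ ∀ x, d ≤ x → x ≤ d + c * l / 2 → x⁻¹ ∉ A := by
  have hb : 0 < b := hl.trans_le hlb
  have hΛ : 0 < l / (b * (b + l)) := by positivity
  have e : (b + l)⁻¹ + l / (b * (b + l)) = b⁻¹ := by field_simp
  obtain ⟨p, h1, h2, h3⟩ := h (b + l)⁻¹ (l / (b * (b + l))) hΛ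
  rw [e] at h2
  set q := p + c * (l / (b * (b + l))) with hq
  have hp : 0 < p := lt_of_lt_of_le (by positivity) h1
  have hpq : p < q := by rw [hq]; have := mul_pos hc hΛ; linarith
  have hqpos : 0 < q := hp.trans hpq
  have hqb : q * b ≤ 1 := by
    have := mul_le_mul_of_nonneg_right h2 hb.le
    rwa [inv_mul_cancel₀ hb.ne'] at this
  have hpb : p * b ≤ 1 := le_trans (by nlinarith) hqb
  have hpinv : p⁻¹ ≤ b + l := by
    rw [inv_le_comm₀ hp (by positivity)]; exact h1
  have key : q⁻¹ + c * l / 2 ≤ p⁻¹ := by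
    have e1 : p⁻¹ - q⁻¹ = c * (l / (b * (b + l))) / (p * q) := by
      rw [inv_sub_inv hp.ne' hqpos.ne', hq]; ring
    have hpq1 : p * q * (b * b) ≤ 1 := by
      have := mul_le_mul hpb hqb (by positivity) zero_le_one
      nlinarith
    have : c * l / 2 ≤ c * (l / (b * (b + l))) / (p * q) := by
      have e2 : c * (l / (b * (b + l))) / (p * q) = c * l / (b * (b + l) * (p * q)) := by
        field_simp
      rw [e2]
      refine div_le_div_of_nonneg_left (by positivity) (by positivity) ?_
      have : b * (b + l) * (p * q) ≤ b * (b + b) * (p * q) := by gcongr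
      nlinarith
    linarith
  refine ⟨q⁻¹, ?_, by linarith, fun x hx1 hx2 => h3 _ ?_ ?_⟩
  · rw [le_inv_comm₀ hb hqpos]; exact h2
  · have hx : 0 < x := lt_of_lt_of_le (by positivity) hx1
    rw [le_inv_comm₀ hp hx]; linarith
  · have hx : 0 < x := lt_of_lt_of_le (by positivity) hx1
    rw [inv_le_comm₀ hx hqpos]; exact hx1

lemma UniformlyPorous.of_inv_mem {A B : Set ℝ} (h : UniformlyPorous A)
    (hAB : ∀ x ∈ B, x ≠ 0 → x⁻¹ ∈ A) : UniformlyPorous B := by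
  obtain ⟨c, hc, h⟩ := h
  refine ⟨c / 8, by positivity, fun a L hL => ?_⟩
  have hl : 0 < L / 4 := by positivity
  have hcL : 0 < c * L := by positivity
  -- The rightmost or the leftmost quarter of the interval stays away from `0`.
  rcases le_total 0 (a + L / 2) with ha | ha
  · obtain ⟨d, h1, h2, h3⟩ := h.exists_inv_hole hc hl (b := a + 3 * L / 4) (by linarith)
    refine ⟨d, by linarith, by linarith, fun x hx1 hx2 hxB => ?_⟩
    exact h3 x hx1 (by linarith) (hAB x hxB (by linarith : (0 : ℝ) < x).ne')
  · obtain ⟨d, h1, h2, h3⟩ := h.neg.exists_inv_hole hc hl (b := -(a + L / 4)) (by linarith)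
    refine ⟨-(d + c * (L / 4) / 2), by linarith, by linarith, fun x hx1 hx2 hxB => ?_⟩
    refine h3 (-x) (by linarith) (by linarith) ?_
    have := hAB x hxB (by linarith : x < 0).ne
    simpa [inv_neg] using this

/-! ### Exponents from iterated coverings -/

/-- `K` intervals of length `L / M` suffice to cover the part of `A` in any interval of
length `L`. -/
def CoverStep (M K : ℕ) (A : Set ℝ) : Prop :=
  ∀ a L : ℝ, 0 < L → ∃ T : Finset ℝ, T.card ≤ K ∧
    ∀ x ∈ A, a ≤ x → x ≤ a + L → ∃ t ∈ T, t ≤ x ∧ x ≤ t + L / M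

lemma CoverStep.iterate {M K : ℕ} {A : Set ℝ} (hM : 2 ≤ M) (h : CoverStep M K A) (n : ℕ) :
    CoverStep (M ^ n) (K ^ n) A := by
  induction n with
  | zero => exact fun a L _ => ⟨{a}, by simp, fun x _ h1 h2 => ⟨a, by simp, h1, by simpa using h2⟩⟩
  | succ n ih =>
    intro a L hL
    have hM0 : (0 : ℝ) < M := by positivity
    obtain ⟨T, hT, hc⟩ := h a L hL
    choose S hS hSc using fun t => ih t (L / M) (by positivity)
    refine ⟨T.biUnion S, ?_, fun x hx h1 h2 => ?_⟩
    · calc _ ≤ T.card * K ^ n := Finset.card_biUnion_le_card_mul _ _ _ fun t _ => hS t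
        _ ≤ K * K ^ n := by gcongr
        _ = _ := by ring
    · obtain ⟨t, ht, h3, h4⟩ := hc x hx h1 h2
      obtain ⟨u, hu, h5, h6⟩ := hSc t x hx h3 h4
      refine ⟨u, Finset.mem_biUnion.2 ⟨t, ht, hu⟩, h5, h6.trans (le_of_eq ?_)⟩
      push_cast
      rw [div_div, pow_succ, mul_comm]

lemma CoverStep.mem_exponents {M K : ℕ} {A : Set ℝ} (hM : 2 ≤ M) (hK : 1 ≤ K)
    (h : CoverStep M K A) : Real.log K / Real.log M ∈ exponents A := by
  have hM1 : (1 : ℝ) < M := by exact_mod_cast hM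
  have hM0 : (0 : ℝ) < M := by linarith
  have hK1 : (1 : ℝ) ≤ K := by exact_mod_cast hK
  have hlog : 0 < Real.log M := Real.log_pos hM1
  set s := Real.log K / Real.log M with hs
  have hs0 : 0 ≤ s := div_nonneg (Real.log_nonneg hK1) hlog.le
  have hMs : (M : ℝ) ^ s = K := by
    rw [Real.rpow_def_of_pos hM0, hs, mul_div_cancel₀ _ hlog.ne', Real.exp_log (by linarith)]
  refine ⟨hs0, (2 * M) ^ s, by positivity, fun R hR r hr hrR x hx => ?_⟩
  -- `n + 1` is the first scale at which the intervals have length at most `r`.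
  obtain ⟨n, hn1, hn2⟩ : ∃ n : ℕ, (M : ℝ) ^ n ≤ 2 * R / r ∧ 2 * R / r < (M : ℝ) ^ (n + 1) :=
    exists_nat_pow_near (by rw [le_div_iff₀ hr]; linarith) hM1
  obtain ⟨T, hT, hc⟩ := h.iterate hM (n + 1) (x - R) (2 * R) (by linarith)
  refine ⟨T.card, fun i => Icc (T.equivFin.symm i : ℝ)
    ((T.equivFin.symm i : ℝ) + 2 * R / (M ^ (n + 1) : ℕ)), ?_, fun i => ?_, ?_⟩
  · rintro y ⟨hy, hyA⟩
    rw [Metric.mem_closedBall, Real.dist_eq, abs_le] at hy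
    obtain ⟨t, ht, h1, h2⟩ := hc y hyA (by linarith) (by linarith)
    refine mem_iUnion.2 ⟨T.equivFin ⟨t, ht⟩, ?_⟩
    simpa using ⟨h1, by simpa using h2⟩
  · refine (Real.ediam_Icc _ _).trans_le (ENNReal.ofReal_le_ofReal ?_)
    push_cast
    rw [add_sub_cancel_left, div_le_iff₀ (by positivity)]
    rw [div_lt_iff₀ hr] at hn2
    linarith
  · have h1 : (T.card : ℝ) ≤ (K : ℝ) ^ (n + 1) := by exact_mod_cast hT
    refine h1.trans ?_
    rw [← hMs, ← Real.rpow_natCast, ← Real.rpow_mul hM0.le, mul_comm s, Real.rpow_mul hM0.le,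
      Real.rpow_natCast, ← Real.mul_rpow (by positivity) (by positivity)]
    refine Real.rpow_le_rpow (by positivity) ?_ hs0
    calc (M : ℝ) ^ (n + 1) = M * M ^ n := by ring
      _ ≤ M * (2 * R / r) := by gcongr
      _ = _ := by ring

lemma exists_index {M : ℕ} (hM : 2 ≤ M) {a L x : ℝ} (hL : 0 < L) (h1 : a ≤ x) (h2 : x ≤ a + L) :
    ∃ i < M, a + i * (L / M) ≤ x ∧ x ≤ a + i * (L / M) + L / M := by
  have hM0 : (0 : ℝ) < M := by positivity
  have hδ : 0 < L / M := by positivity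
  have hδM : M * (L / M) = L := by field_simp
  generalize L / (M : ℝ) = δ at *
  rcases eq_or_lt_of_le h2 with rfl | h2
  · refine ⟨M - 1, by omega, ?_⟩
    rw [Nat.cast_sub (by omega)]
    push_cast
    constructor <;> linarith
  · have h0 : 0 ≤ (x - a) / δ := div_nonneg (by linarith) hδ.le
    have h3 := Nat.floor_le h0
    have h4 := Nat.lt_floor_add_one ((x - a) / δ)
    rw [le_div_iff₀ hδ] at h3
    rw [div_lt_iff₀ hδ] at h4
    refine ⟨_, ?_, by linarith, by linarith⟩
    rw [Nat.floor_lt h0, div_lt_iff₀ hδ]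
    linarith

lemma one_mem_exponents (A : Set ℝ) : (1 : ℝ) ∈ exponents A := by
  have h : CoverStep 2 2 A := by
    intro a L hL
    refine ⟨(Finset.range 2).image fun i : ℕ => a + i * (L / (2 : ℕ)),
      Finset.card_image_le.trans (by simp), fun x _ h1 h2 => ?_⟩
    obtain ⟨i, hi, h3, h4⟩ := exists_index le_rfl hL h1 h2
    exact ⟨_, Finset.mem_image_of_mem _ (Finset.mem_range.2 hi), h3, h4⟩
  have := h.mem_exponents le_rfl one_le_two
  rwa [div_self (Real.log_pos (by norm_num)).ne'] at this

lemma exists_mem_exponents_lt_one {A : Set ℝ} (h : UniformlyPorous A) :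
    ∃ s ∈ exponents A, s < 1 := by
  obtain ⟨c, hc, h⟩ := h
  obtain ⟨M, hM⟩ := exists_nat_ge (max 2 (2 / c))
  have hM2 : 2 ≤ M := by exact_mod_cast (le_max_left _ _).trans hM
  have hM0 : (0 : ℝ) < M := by positivity
  have hMc : 2 ≤ c * M := by
    have := (le_max_right _ _).trans hM
    rw [div_le_iff₀ hc] at this
    linarith
  have hstep : CoverStep M (M - 1) A := by
    intro a L hL
    obtain ⟨b, hb1, hb2, hb3⟩ := h a L hL
    set δ := L / M with hδ'
    have hδ : 0 < δ := by positivity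
    have hδM : M * δ = L := by rw [hδ']; field_simp
    have hcδ : 2 * δ ≤ c * L := by rw [← hδM, ← mul_assoc]; gcongr
    have h0 : 0 ≤ (b - a) / δ := div_nonneg (by linarith) hδ.le
    -- The hole has length at least `2 * δ`, so it contains the `j`-th part.
    set j := ⌈(b - a) / δ⌉₊ with hj
    have h3 : (b - a) / δ ≤ j := Nat.le_ceil _
    have h4 : (j : ℝ) < (b - a) / δ + 1 := Nat.ceil_lt_add_one h0
    rw [div_le_iff₀ hδ] at h3
    rw [← sub_lt_iff_lt_add, lt_div_iff₀ hδ] at h4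
    have hjM : j < M := by
      have : (j : ℝ) * δ < M * δ := by linarith
      exact_mod_cast lt_of_mul_lt_mul_right this hδ.le
    refine ⟨((Finset.range M).erase j).image fun i : ℕ => a + i * δ,
      Finset.card_image_le.trans ?_, fun x hx h1 h2 => ?_⟩
    · rw [Finset.card_erase_of_mem (Finset.mem_range.2 hjM), Finset.card_range]
    · obtain ⟨i, hi, h5, h6⟩ := exists_index hM2 hL h1 h2
      refine ⟨_, Finset.mem_image_of_mem _ (Finset.mem_erase.2 ⟨?_, Finset.mem_range.2 hi⟩), h5, h6⟩
      rintro rfl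
      exact hb3 x (by linarith) (by linarith) hx
  refine ⟨_, hstep.mem_exponents hM2 (by omega), ?_⟩
  rw [div_lt_one (Real.log_pos (by exact_mod_cast hM2))]
  exact Real.log_lt_log (by exact_mod_cast (by omega : 0 < M - 1))
    (by exact_mod_cast (by omega : M - 1 < M))

/-! ### Porosity from small exponents -/

lemma uniformlyPorous_of_mem_exponents {A : Set ℝ} {s : ℝ} (hs : s ∈ exponents A) (hs1 : s < 1) :
    UniformlyPorous A := by
  obtain ⟨hs0, C, hC, h⟩ := hs
  obtain ⟨k, hk, hkC⟩ : ∃ k : ℕ, 1 ≤ k ∧ C * 4 ^ s < (k : ℝ) ^ (1 - s) := by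
    have := (tendsto_rpow_atTop (by linarith : 0 < 1 - s)).comp tendsto_natCast_atTop_atTop
    exact ((eventually_ge_atTop 1).and (this.eventually_gt_atTop (C * 4 ^ s))).exists
  have hk0 : (0 : ℝ) < k := by exact_mod_cast hk
  refine ⟨1 / (2 * k), by positivity, ?_⟩
  by_contra hnp
  simp only [PorousWith, not_forall, not_exists, not_and, not_not] at hnp
  obtain ⟨a, L, hL, hnp⟩ := hnp
  set δ := 1 / (2 * (k : ℝ)) * L with hδ'
  have hδ : 0 < δ := by positivity
  have hδk : 2 * k * δ = L := by rw [hδ']; field_simp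
  -- One point of `A` in every other part of length `δ`: these are `δ`-separated.
  have hpt : ∀ i : Fin k, ∃ x, a + 2 * (i : ℕ) * δ ≤ x ∧ x ≤ a + 2 * (i : ℕ) * δ + δ ∧ x ∈ A := by
    intro i
    have hi : ((i : ℕ) : ℝ) + 1 ≤ k := by exact_mod_cast i.2
    have := hnp (a + 2 * (i : ℕ) * δ) (by have : 0 ≤ 2 * ((i : ℕ) : ℝ) * δ := by positivity
                                          linarith) (by nlinarith)
    obtain ⟨x, h1, h2, h3⟩ := this
    exact ⟨x, h1, h2, h3⟩
  choose x hx1 hx2 hxA using hpt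
  have hxa : ∀ i, a ≤ x i ∧ x i ≤ a + L := by
    intro i
    have hi : ((i : ℕ) : ℝ) + 1 ≤ k := by exact_mod_cast i.2
    have h0 : 0 ≤ 2 * ((i : ℕ) : ℝ) * δ := by positivity
    exact ⟨by linarith [hx1 i], by nlinarith [hx2 i]⟩
  have hsep : ∀ i j, i < j → δ ≤ x j - x i := by
    intro i j hij
    have hij' : ((i : ℕ) : ℝ) + 1 ≤ (j : ℕ) := by exact_mod_cast hij
    nlinarith [hx1 j, hx2 i]
  have hrL : δ / 2 < L := by
    have : (1 : ℝ) ≤ k := by exact_mod_cast hk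
    nlinarith
  obtain ⟨N, U, hU, hd, hN⟩ := h L hL (δ / 2) (by positivity) hrL (x ⟨0, hk⟩) (hxA _)
  have hmem : ∀ i, ∃ m, x i ∈ U m := by
    intro i
    refine mem_iUnion.1 (hU ⟨?_, hxA i⟩)
    rw [Metric.mem_closedBall, Real.dist_eq, abs_le]
    constructor <;> linarith [hxa i, hxa ⟨0, hk⟩]
  choose f hf using hmem
  have hclose : ∀ i j, f i = f j → |x i - x j| ≤ δ / 2 := by
    intro i j hij
    have h1 := (Metric.edist_le_ediam_of_mem (hf i) (hij ▸ hf j)).trans (hd (f i))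
    rw [edist_dist, ENNReal.ofReal_le_ofReal_iff (by positivity), Real.dist_eq] at h1
    exact h1
  have hinj : Function.Injective f := by
    intro i j hij
    have h1 := abs_le.1 (hclose i j hij)
    rcases lt_trichotomy i j with hlt | rfl | hlt
    · linarith [hsep i j hlt]
    · rfl
    · linarith [hsep j i hlt]
  have hkN : (k : ℝ) ≤ N := by
    have := Fintype.card_le_of_injective f hinj
    simp only [Fintype.card_fin] at this
    exact_mod_cast this
  have hratio : L / (δ / 2) = 4 * k := by rw [← hδk]; field_simp; norm_num
  rw [hratio, Real.mul_rpow (by norm_num) hk0.le, ← mul_assoc] at hN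
  have hsplit : (k : ℝ) = (k : ℝ) ^ (1 - s) * (k : ℝ) ^ s := by
    rw [← Real.rpow_add hk0]; simp
  have hlt : C * 4 ^ s * (k : ℝ) ^ s < (k : ℝ) ^ (1 - s) * (k : ℝ) ^ s := by gcongr
  linarith

lemma assouadDim_eq_one_iff (A : Set ℝ) : assouadDim A = 1 ↔ ¬ UniformlyPorous A := by
  have hdef : assouadDim A = sInf (exponents A) := rfl
  have hbdd : BddBelow (exponents A) := ⟨0, fun s hs => hs.1⟩
  rw [hdef]
  constructor
  · intro h1 hp
    obtain ⟨s, hs, hs1⟩ := exists_mem_exponents_lt_one hp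
    linarith [csInf_le hbdd hs]
  · intro hp
    refine le_antisymm (csInf_le hbdd (one_mem_exponents A)) ?_
    refine le_csInf ⟨1, one_mem_exponents A⟩ fun s hs => ?_
    by_contra! hs1
    exact hp (uniformlyPorous_of_mem_exponents hs hs1)

/-! ### Reciprocals of sets of integers -/

/-- For `F ⊆ ℤ` containing a non-zero element, `F` (as a subset of `ℝ`) has Assouad
dimension 1 if and only if `1/F = {1/n : n ∈ F, n ≠ 0}` has Assouad dimension 1. -/
theorem assouadDim_int_iff_reciprocal (F : Set ℤ) (h : ∃ n ∈ F, n ≠ 0) :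
    assouadDim ((fun n : ℤ => (n : ℝ)) '' F) = 1 ↔
      assouadDim {x : ℝ | ∃ n ∈ F, n ≠ 0 ∧ x = 1 / (n : ℝ)} = 1 := by
  rw [assouadDim_eq_one_iff, assouadDim_eq_one_iff, not_iff_not]
  constructor
  · refine fun hp => hp.of_inv_mem ?_
    rintro _ ⟨n, hn, -, rfl⟩ -
    exact ⟨n, hn, by simp⟩
  · refine fun hp => hp.of_inv_mem ?_
    rintro _ ⟨n, hn, rfl⟩ hne
    exact ⟨n, hn, by simpa using hne, by simp⟩
end

section
/- Let F ⊆ ℤ be non-empty, regarded as a subset of ℝ. Then the Assouad dimension of F equals 1 if and only if for all k ∈ ℕ and all ε > 0 there exist δ > 0, an arithmetic progression P of length k and gap length δ, and a subset E ⊆ F such that the Hausdorff distance between E and P is at most εδ. -/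
/-!
Both implications are quantitative pigeonhole arguments about intervals of the real line.

*Progressions force dimension one.* If points of `F` lie within `δ / 4` of each of the `k` terms of
a progression of gap `δ`, these `k` points are more than `δ / 2` apart and lie in a ball of radius
`k δ`. Hence every admissible exponent `s` satisfies `k ≤ C (2 k) ^ s` for all `k`, so `1 ≤ s`
(`one_le_of_isAssouadExponent`). The exponent `1` is admissible for every subset of `ℝ`
(`isAssouadExponent_one`).

*No progressions force dimension less than one.* Suppose progressions of length `k` cannot be found
up to error `ε δ`. Choose `m ≥ 2` with `1 / m ≤ ε` and cut any interval into `M = m k` equal cells. The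
cells with index `0, m, 2 m, …` start at the terms of a progression of length `k`, so they cannot
all meet `F`: at least one of the `M` cells misses `F` (`exists_empty_cell`). Iterating this inside
the surviving cells, `(M - 1) ^ n` cells of relative length `M ^ (-n)` cover the part of `F` in an
interval (`exists_cover_pow`), so `log (M - 1) / log M < 1` is an admissible exponent
(`exists_isAssouadExponent_lt_one`).
-/

open Set Metric Filter

/-- `s` is one of the exponents over which the infimum in `assouadDim` is taken. -/
def IsAssouadExponent {X : Type*} [PseudoMetricSpace X] (F : Set X) (s : ℝ) : Prop :=
  0 ≤ s ∧ ∃ C : ℝ, 0 < C ∧ ∀ R : ℝ, 0 < R → ∀ r : ℝ, 0 < r → r < R →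
    ∀ x ∈ F, ∃ N : ℕ, ∃ U : Fin N → Set X,
      (Metric.closedBall x R ∩ F ⊆ ⋃ i, U i) ∧
      (∀ i, EMetric.diam (U i) ≤ ENNReal.ofReal r) ∧
      (N : ℝ) ≤ C * (R / r) ^ s

lemma assouadDim_le {X : Type*} [PseudoMetricSpace X] {F : Set X} {s : ℝ}
    (h : IsAssouadExponent F s) : assouadDim F ≤ s :=
  csInf_le ⟨0, fun _ hs => hs.1⟩ h

/-- On the line it suffices to cover intervals of length `3 R` by half-open intervals of
length `r`. -/
lemma IsAssouadExponent.of_cover {F : Set ℝ} {s C : ℝ} (hs : 0 ≤ s) (hC : 0 < C)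
    (h : ∀ a R r : ℝ, 0 < r → r < R → ∃ T : Finset ℝ, (T.card : ℝ) ≤ C * (R / r) ^ s ∧
      ∀ y ∈ F, y ∈ Ico a (a + 3 * R) → ∃ b ∈ T, y ∈ Ico b (b + r)) :
    IsAssouadExponent F s := by
  refine ⟨hs, C, hC, fun R hR r hr hrR x _ => ?_⟩
  obtain ⟨T, hT, hcov⟩ := h (x - R) R r hr hrR
  refine ⟨T.card, fun i => Ico (T.equivFin.symm i : ℝ) (T.equivFin.symm i + r), ?_, ?_, hT⟩
  · rintro y ⟨hy, hyF⟩
    rw [Metric.mem_closedBall, Real.dist_eq, abs_le] at hy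
    obtain ⟨b, hb, hyb⟩ := hcov y hyF ⟨by linarith, by linarith⟩
    exact mem_iUnion.2 ⟨T.equivFin ⟨b, hb⟩, by simpa using hyb⟩
  · intro i
    refine Metric.ediam_le fun y hy z hz => ?_
    rw [edist_dist, Real.dist_eq]
    refine ENNReal.ofReal_le_ofReal (abs_le.2 ⟨?_, ?_⟩) <;> linarith [hy.1, hy.2, hz.1, hz.2]

/-- An interval of length `n c` is the union of `n` cells of length `c`. -/
lemma exists_cell {a c y : ℝ} {n : ℕ} (hc : 0 < c) (hy : y ∈ Ico a (a + n * c)) :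
    ∃ j < n, y ∈ Ico (a + j * c) (a + j * c + c) := by
  have h0 : 0 ≤ (y - a) / c := div_nonneg (by linarith [hy.1]) hc.le
  have h1 := Nat.floor_le h0
  have h2 := Nat.lt_floor_add_one ((y - a) / c)
  rw [le_div_iff₀ hc] at h1
  rw [div_lt_iff₀ hc] at h2
  refine ⟨⌊(y - a) / c⌋₊, ?_, by linarith, by linarith⟩
  rw [Nat.floor_lt h0, div_lt_iff₀ hc]
  linarith [hy.2]

lemma isAssouadExponent_one (F : Set ℝ) : IsAssouadExponent F 1 := by
  refine .of_cover (C := 4) zero_le_one (by norm_num) fun a R r hr hrR => ?_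
  have h1 : 1 < R / r := (one_lt_div hr).2 hrR
  refine ⟨(Finset.range ⌈3 * (R / r)⌉₊).image fun j : ℕ => a + j * r, ?_, ?_⟩
  · have hcard : ((Finset.range ⌈3 * (R / r)⌉₊).image fun j : ℕ => a + j * r).card
        ≤ ⌈3 * (R / r)⌉₊ := Finset.card_image_le.trans (by simp)
    have hceil := Nat.ceil_lt_add_one (a := 3 * (R / r)) (by linarith)
    rw [Real.rpow_one]
    have : (((Finset.range ⌈3 * (R / r)⌉₊).image fun j : ℕ => a + j * r).card : ℝ)
        ≤ ⌈3 * (R / r)⌉₊ := by exact_mod_cast hcard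
    linarith
  · intro y _ hy
    have hle := mul_le_mul_of_nonneg_right (Nat.le_ceil (3 * (R / r))) hr.le
    have he : 3 * (R / r) * r = 3 * R := by field_simp
    obtain ⟨j, hj, hyj⟩ := exists_cell (n := ⌈3 * (R / r)⌉₊) hr
      (show y ∈ Ico a _ from ⟨hy.1, by linarith [hy.2]⟩)
    exact ⟨_, Finset.mem_image_of_mem _ (Finset.mem_range.2 hj), hyj⟩

/-- If `F` contains `k` points that are `δ / 4`-close to the terms of a progression of gap `δ`, for
arbitrarily large `k`, then no exponent below `1` is admissible. -/
lemma one_le_of_isAssouadExponent {F : Set ℝ}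
    (h : ∀ k : ℕ, ∀ ε : ℝ, 0 < ε → ∃ δ : ℝ, 0 < δ ∧ ∃ t : ℝ, ∃ E : Set ℝ,
        E ⊆ F ∧
        EMetric.hausdorffEdist E (arithmeticProgression k δ t) ≤ ENNReal.ofReal (ε * δ))
    {s : ℝ} (hs : IsAssouadExponent F s) : 1 ≤ s := by
  obtain ⟨_, C, hC, hcov⟩ := hs
  have key : ∀ k : ℕ, 0 < k → (k : ℝ) ≤ C * (2 * k) ^ s := by
    intro k hk
    have hk1 : (1 : ℝ) ≤ k := by exact_mod_cast hk
    obtain ⟨δ, hδ, t, E, hEF, hE⟩ := h k (1 / 8) (by norm_num)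
    have hlt : Metric.hausdorffEDist (arithmeticProgression k δ t) E < ENNReal.ofReal (δ / 4) := by
      rw [Metric.hausdorffEDist_comm]
      exact lt_of_le_of_lt hE ((ENNReal.ofReal_lt_ofReal_iff (by positivity)).2 (by linarith))
    have hpt : ∀ i : Fin k, ∃ z ∈ F, |t + δ * (i : ℕ) - z| < δ / 4 := by
      intro i
      obtain ⟨z, hz, hd⟩ := Metric.exists_edist_lt_of_hausdorffEDist_lt
        (show t + δ * (i : ℕ) ∈ arithmeticProgression k δ t from ⟨i, i.2, rfl⟩) hlt
      rw [edist_dist, ENNReal.ofReal_lt_ofReal_iff (by positivity), Real.dist_eq] at hd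
      exact ⟨z, hEF hz, hd⟩
    choose f hfF hf using hpt
    obtain ⟨N, U, hU, hdiam, hN⟩ := hcov (k * δ) (by positivity) (δ / 2) (by positivity)
      (by nlinarith) (f ⟨0, hk⟩) (hfF _)
    have hin : ∀ i, ∃ j, f i ∈ U j := by
      intro i
      refine mem_iUnion.1 (hU ⟨?_, hfF i⟩)
      have h0 := abs_lt.1 (hf ⟨0, hk⟩)
      have hi := abs_lt.1 (hf i)
      have hik : ((i : ℕ) : ℝ) + 1 ≤ k := by exact_mod_cast i.2
      have hi0 : (0 : ℝ) ≤ (i : ℕ) := Nat.cast_nonneg _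
      have hp := mul_le_mul_of_nonneg_left hik hδ.le
      have hp0 := mul_nonneg hδ.le hi0
      simp only [Nat.cast_zero, mul_zero, add_zero] at h0
      rw [Metric.mem_closedBall, Real.dist_eq, abs_le]
      constructor <;> nlinarith
    choose g hg using hin
    have hinj : Function.Injective g := by
      intro i j hij
      by_contra hne
      have hd : dist (f i) (f j) ≤ δ / 2 := by
        have hle := (Metric.edist_le_ediam_of_mem (hg i) (hij ▸ hg j)).trans (hdiam (g i))
        rwa [edist_dist, ENNReal.ofReal_le_ofReal_iff (by positivity)] at hle
      rw [Real.dist_eq, abs_le] at hd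
      have hi := abs_lt.1 (hf i)
      have hj := abs_lt.1 (hf j)
      rcases lt_or_gt_of_ne (fun e => hne (Fin.ext e) : (i : ℕ) ≠ j) with hlt | hlt
      · have : ((i : ℕ) : ℝ) + 1 ≤ (j : ℕ) := by exact_mod_cast hlt
        have := mul_le_mul_of_nonneg_left this hδ.le
        linarith
      · have : ((j : ℕ) : ℝ) + 1 ≤ (i : ℕ) := by exact_mod_cast hlt
        have := mul_le_mul_of_nonneg_left this hδ.le
        linarith
    have hkN : k ≤ N := by simpa using Fintype.card_le_of_injective g hinj
    have hR : k * δ / (δ / 2) = 2 * k := by field_simp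
    rw [hR] at hN
    exact le_trans (by exact_mod_cast hkN) hN
  by_contra! hs1
  have ht : Tendsto (fun k : ℕ => (k : ℝ) ^ (1 - s)) atTop atTop :=
    (tendsto_rpow_atTop (by linarith)).comp tendsto_natCast_atTop_atTop
  obtain ⟨k, hkC, hk⟩ := ((ht.eventually_gt_atTop (C * 2 ^ s)).and (eventually_gt_atTop 0)).exists
  have hk' : (0 : ℝ) < k := by exact_mod_cast hk
  have h1 := key k hk
  rw [Real.mul_rpow (by norm_num) hk'.le, ← mul_assoc] at h1
  have h2 := mul_lt_mul_of_pos_right hkC (Real.rpow_pos_of_pos hk' s)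
  rw [← Real.rpow_add hk', sub_add_cancel, Real.rpow_one] at h2
  linarith

/-- If `F` contains no approximate progression of length `k` with relative error `ε`, then among
any `m * k` consecutive cells of equal length at least one misses `F`, as soon as `1 ≤ ε * m`. -/
lemma exists_empty_cell {F : Set ℝ} {k m : ℕ} {ε : ℝ} (hm : 0 < m) (hεm : 1 ≤ ε * m)
    (h : ¬ ∃ δ : ℝ, 0 < δ ∧ ∃ t : ℝ, ∃ E : Set ℝ, E ⊆ F ∧
        EMetric.hausdorffEdist E (arithmeticProgression k δ t) ≤ ENNReal.ofReal (ε * δ))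
    (a : ℝ) {c : ℝ} (hc : 0 < c) :
    ∃ j < m * k, ∀ y ∈ F, y ∉ Ico (a + j * c) (a + j * c + c) := by
  by_contra! hcon
  have hm' : (0 : ℝ) < m := by exact_mod_cast hm
  have hpt : ∀ i : ℕ, i < k → ∃ y ∈ F, edist y (a + m * c * i) ≤ ENNReal.ofReal (ε * (m * c)) := by
    intro i hi
    obtain ⟨y, hyF, hy⟩ := hcon (m * i) (Nat.mul_lt_mul_of_pos_left hi hm)
    push_cast at hy
    refine ⟨y, hyF, ?_⟩
    rw [edist_dist, Real.dist_eq]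
    have := mul_le_mul_of_nonneg_right hεm hc.le
    refine ENNReal.ofReal_le_ofReal (abs_le.2 ⟨?_, ?_⟩) <;> linarith [hy.1, hy.2]
  choose! f hfF hf using hpt
  refine h ⟨m * c, by positivity, a, f '' {i | i < k}, ?_, Metric.hausdorffEDist_le_of_mem_edist ?_ ?_⟩
  · rintro _ ⟨i, hi, rfl⟩
    exact hfF i hi
  · rintro _ ⟨i, hi, rfl⟩
    exact ⟨_, ⟨i, hi, rfl⟩, hf i hi⟩
  · rintro _ ⟨i, hi, rfl⟩
    exact ⟨_, ⟨i, hi, rfl⟩, by rw [edist_comm]; exact hf i hi⟩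

/-- Discarding an empty cell at each of `n` successive subdivisions into `M` cells leaves at most
`(M - 1) ^ n` cells, of the final length `c`. -/
lemma exists_cover_pow {F : Set ℝ} {M : ℕ} (hM : 0 < M)
    (h : ∀ a c : ℝ, 0 < c → ∃ j < M, ∀ y ∈ F, y ∉ Ico (a + j * c) (a + j * c + c)) (n : ℕ) :
    ∀ a c : ℝ, 0 < c → ∃ T : Finset ℝ, T.card ≤ (M - 1) ^ n ∧
      ∀ y ∈ F, y ∈ Ico a (a + (M : ℝ) ^ n * c) → ∃ b ∈ T, y ∈ Ico b (b + c) := by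
  induction n with
  | zero => exact fun a c _ => ⟨{a}, by simp, fun y _ hy => ⟨a, by simp, by simpa using hy⟩⟩
  | succ n ih =>
    intro a c hc
    have hM' : (0 : ℝ) < M := by exact_mod_cast hM
    obtain ⟨T, hT, hcov⟩ := ih a (M * c) (by positivity)
    have hgap := fun b => h b c hc
    choose j hj hjF using hgap
    refine ⟨T.biUnion fun b => ((Finset.range M).erase (j b)).image fun i : ℕ => b + i * c, ?_, ?_⟩
    · rw [pow_succ]
      refine (Finset.card_biUnion_le_card_mul _ _ (M - 1) fun b _ => ?_).trans
        (Nat.mul_le_mul_right _ hT)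
      refine Finset.card_image_le.trans ?_
      rw [Finset.card_erase_of_mem (Finset.mem_range.2 (hj b)), Finset.card_range]
    · intro y hyF hy
      rw [pow_succ, mul_assoc] at hy
      obtain ⟨b, hb, hyb⟩ := hcov y hyF hy
      obtain ⟨i, hi, hyi⟩ := exists_cell hc hyb
      have hij : i ≠ j b := by
        rintro rfl
        exact hjF b y hyF hyi
      exact ⟨b + i * c, Finset.mem_biUnion.2 ⟨b, hb, Finset.mem_image_of_mem _
        (Finset.mem_erase.2 ⟨hij, Finset.mem_range.2 hi⟩)⟩, hyi⟩

lemma exists_isAssouadExponent_lt_one {F : Set ℝ} {M : ℕ} (hM : 2 ≤ M)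
    (h : ∀ a c : ℝ, 0 < c → ∃ j < M, ∀ y ∈ F, y ∉ Ico (a + j * c) (a + j * c + c)) :
    ∃ s < 1, IsAssouadExponent F s := by
  have hM' : (2 : ℝ) ≤ M := by exact_mod_cast hM
  have hM0 : (0 : ℝ) < M := by linarith
  have hs0 : 0 ≤ Real.logb M (M - 1) := Real.logb_nonneg (by linarith) (by linarith)
  have hMs : (M : ℝ) ^ Real.logb M (M - 1) = M - 1 :=
    Real.rpow_logb hM0 (by linarith) (by linarith)
  refine ⟨Real.logb M (M - 1), ?_, ?_⟩
  · rw [Real.logb_lt_iff_lt_rpow (by linarith) (by linarith), Real.rpow_one]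
    linarith
  refine .of_cover (C := (M * 3) ^ Real.logb M (M - 1)) hs0 (by positivity)
    fun a R r hr hrR => ?_
  have hR : 0 < R := hr.trans hrR
  have h1 : 1 < R / r := (one_lt_div hr).2 hrR
  -- The number of subdivisions is the first for which cells of length `r` span length `3 R`.
  obtain ⟨n, hn, hn'⟩ := exists_nat_pow_near (x := 3 * (R / r)) (y := (M : ℝ))
    (by linarith) (by linarith)
  obtain ⟨T, hT, hcov⟩ := exists_cover_pow (by omega) h (n + 1) a r hr
  refine ⟨T, ?_, fun y hyF hy => hcov y hyF ⟨hy.1, hy.2.trans ?_⟩⟩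
  · calc (T.card : ℝ) ≤ ((M - 1 : ℕ) : ℝ) ^ (n + 1) := by exact_mod_cast hT
      _ = ((M : ℝ) ^ (n + 1)) ^ Real.logb M (M - 1) := by
        rw [Nat.cast_sub (by omega), Nat.cast_one, ← Real.rpow_natCast (M : ℝ), ← Real.rpow_mul hM0.le,
          mul_comm, Real.rpow_mul hM0.le, hMs, Real.rpow_natCast]
      _ ≤ (M * 3 * (R / r)) ^ Real.logb M (M - 1) := by
        refine Real.rpow_le_rpow (by positivity) ?_ hs0
        rw [pow_succ]
        linarith [mul_le_mul_of_nonneg_right hn hM0.le]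
      _ = _ := Real.mul_rpow (by positivity) (by positivity)
  · have := mul_lt_mul_of_pos_right hn' hr
    have he : 3 * (R / r) * r = 3 * R := by field_simp
    linarith

/-- A non-empty set `F ⊆ ℤ`, regarded as a subset of `ℝ`, has Assouad dimension 1
if and only if for all `k` and `ε > 0` one may find an arithmetic progression of length
`k` and gap length `δ` within Hausdorff distance `ε * δ` of a subset of `F`. -/
theorem assouadDim_int_eq_one_iff_asymp_APs (F : Set ℤ) (hF : F.Nonempty) :
    assouadDim ((fun n : ℤ => (n : ℝ)) '' F) = 1 ↔
      (∀ k : ℕ, ∀ ε : ℝ, 0 < ε → ∃ δ : ℝ, 0 < δ ∧ ∃ t : ℝ, ∃ E : Set ℝ,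
        E ⊆ (fun n : ℤ => (n : ℝ)) '' F ∧
        EMetric.hausdorffEdist E (arithmeticProgression k δ t) ≤ ENNReal.ofReal (ε * δ)) := by
  constructor
  · intro hdim k ε hε
    by_contra hcon
    have hk : 0 < k := by
      rcases Nat.eq_zero_or_pos k with rfl | hk
      -- The progression of length `0` is empty, and so is `E`.
      · refine absurd ⟨1, one_pos, 0, ∅, empty_subset _, ?_⟩ hcon
        exact Metric.hausdorffEDist_le_of_mem_edist (by simp)
          (by rintro _ ⟨i, hi, _⟩; exact absurd hi (Nat.not_lt_zero _))
      · exact hk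
    obtain ⟨m, hm⟩ := exists_nat_ge (1 / ε)
    -- Passing to `m + 2` guarantees at least two cells per subdivision.
    have hεm : 1 ≤ ε * ((m + 2 : ℕ) : ℝ) := by
      rw [div_le_iff₀ hε] at hm
      push_cast
      linarith
    obtain ⟨s, hs1, hs⟩ := exists_isAssouadExponent_lt_one (M := (m + 2) * k) (by nlinarith)
      fun a c hc => exists_empty_cell (by omega) hεm hcon a hc
    linarith [assouadDim_le hs]
  · intro h
    exact le_antisymm (assouadDim_le (isAssouadExponent_one _))
      (le_csInf ⟨1, isAssouadExponent_one _⟩ fun s hs => one_le_of_isAssouadExponent h hs)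
end

section
/- For any real number m ≥ 1, the set {1/p^m : p prime} ⊆ ℝ has Assouad dimension equal to 1. -/
/-!
A set of reals has Assouad dimension at most `1`, since an interval of length `2R`
is covered by `⌊2R/r⌋ + 1` intervals of length `r` (`one_mem_of_real`).

For the lower bound, consider the primes in a dyadic window `[N, 2N)`. The points `1/p^m` with `p`
in this window lie in an interval of length `N^(-m)` and are pairwise more than `(2N)^(-m-1)` apart
(`gap_lt`, as `(b/a)^m ≥ b/a` for `a < b`), so a set of diameter `(2N)^(-m-1)` contains at most one of
them. A covering bound with exponent `s` for `R = N^(-m)` and `r = (2N)^(-m-1)` thus gives at most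
`O((R/r)^s) = O(N^s)` primes in `[N, 2N)` (`card_primes_le`). If `s < 1`, summing over the windows
`N = 2^k` bounds `∑ 1/p` by a convergent geometric series (`summable_of_dyadic`), contradicting the
divergence of the sum of the reciprocals of the primes. -/


open Set Metric Filter

/-- The covering condition with exponent `1` holds for every set of reals. -/
lemma one_mem_of_real (F : Set ℝ) {R r : ℝ} (hr : 0 < r) (hrR : r < R) (x : ℝ) :
    ∃ N : ℕ, ∃ U : Fin N → Set ℝ,
      (Metric.closedBall x R ∩ F ⊆ ⋃ i, U i) ∧
      (∀ i, EMetric.diam (U i) ≤ ENNReal.ofReal r) ∧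
      (N : ℝ) ≤ 3 * (R / r) ^ (1 : ℝ) := by
  have hone : 1 < R / r := by rwa [one_lt_div hr]
  refine ⟨⌊2 * (R / r)⌋₊ + 1,
    fun i => Set.Icc (x - R + i * r) (x - R + i * r + r), ?_, ?_, ?_⟩
  · rintro y ⟨hy, -⟩
    rw [Real.closedBall_eq_Icc] at hy
    have h0 : 0 ≤ (y - (x - R)) / r := div_nonneg (by linarith [hy.1]) hr.le
    have hle : (y - (x - R)) / r ≤ 2 * (R / r) := by
      rw [← mul_div_assoc]
      gcongr
      linarith [hy.2]
    refine Set.mem_iUnion.2 ⟨⟨⌊(y - (x - R)) / r⌋₊,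
      Nat.lt_succ_of_le (Nat.floor_le_floor hle)⟩, ?_⟩
    have h1 := Nat.floor_le h0
    have h2 := Nat.lt_floor_add_one ((y - (x - R)) / r)
    rw [le_div_iff₀ hr] at h1
    rw [div_lt_iff₀ hr] at h2
    constructor
    · dsimp only
      linarith
    · dsimp only
      linarith
  · intro i
    dsimp only
    refine (Real.ediam_Icc _ _).le.trans ?_
    simp
  · have := Nat.floor_le (show 0 ≤ 2 * (R / r) by linarith)
    push_cast
    rw [Real.rpow_one]
    linarith

lemma gap_lt {m : ℝ} (hm : 1 ≤ m) {N a b : ℕ} (ha : N ≤ a) (hN : 0 < N) (hab : a < b)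
    (hb : b < 2 * N) :
    1 / (2 * N : ℝ) ^ (m + 1) < 1 / (a : ℝ) ^ m - 1 / (b : ℝ) ^ m := by
  have ha0 : (0 : ℝ) < a := by exact_mod_cast hN.trans_le ha
  have hab' : (a : ℝ) + 1 ≤ b := by exact_mod_cast hab
  have hb0 : (0 : ℝ) < b := by linarith
  have hbN : (b : ℝ) < 2 * N := by exact_mod_cast hb
  have hN0 : (0 : ℝ) < 2 * N := by linarith
  have hbm : 0 < (b : ℝ) ^ m := Real.rpow_pos_of_pos hb0 m
  have hNm : 0 < (2 * N : ℝ) ^ m := Real.rpow_pos_of_pos hN0 m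
  have hratio : (b : ℝ) / a ≤ (b : ℝ) ^ m / (a : ℝ) ^ m := by
    rw [← Real.div_rpow hb0.le ha0.le]
    refine Real.self_le_rpow_of_one_le ?_ hm
    rw [one_le_div ha0]; linarith
  have hstep : 1 / (2 * N : ℝ) < (b : ℝ) ^ m / (a : ℝ) ^ m - 1 := by
    have h1 : 1 / (2 * N : ℝ) < 1 / a := one_div_lt_one_div_of_lt ha0 (by linarith)
    have h2 : 1 / (a : ℝ) + 1 ≤ b / a := by
      rw [div_add_one ha0.ne']; gcongr; linarith
    linarith
  calc 1 / (2 * N : ℝ) ^ (m + 1) = 1 / (2 * N : ℝ) ^ m * (1 / (2 * N)) := by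
        rw [Real.rpow_add hN0, Real.rpow_one, one_div_mul_one_div]
    _ < 1 / (2 * N : ℝ) ^ m * ((b : ℝ) ^ m / (a : ℝ) ^ m - 1) := by gcongr
    _ ≤ 1 / (b : ℝ) ^ m * ((b : ℝ) ^ m / (a : ℝ) ^ m - 1) := by
        have : 0 < 1 / (2 * N : ℝ) := by positivity
        gcongr
        linarith
    _ = 1 / (a : ℝ) ^ m - 1 / (b : ℝ) ^ m := by
        have : 0 < (a : ℝ) ^ m := Real.rpow_pos_of_pos ha0 m
        field_simp

/-- A covering bound with exponent `s` and constant `C` for `{1/p^m}` bounds the number of primes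
in `[N, 2N)` by a constant times `N^s`. -/
lemma card_primes_le {m s C : ℝ} (hm : 1 ≤ m) (hC : 0 < C)
    (H : ∀ R : ℝ, 0 < R → ∀ r : ℝ, 0 < r → r < R →
      ∀ x ∈ {x : ℝ | ∃ p : ℕ, p.Prime ∧ x = 1 / (p : ℝ) ^ m}, ∃ N : ℕ, ∃ U : Fin N → Set ℝ,
      (Metric.closedBall x R ∩ {x : ℝ | ∃ p : ℕ, p.Prime ∧ x = 1 / (p : ℝ) ^ m} ⊆ ⋃ i, U i) ∧
      (∀ i, EMetric.diam (U i) ≤ ENNReal.ofReal r) ∧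
      (N : ℝ) ≤ C * (R / r) ^ s) {N : ℕ} (hN : 0 < N) :
    (((Finset.Ico N (2 * N)).filter Nat.Prime).card : ℝ)
      ≤ C * ((2 : ℝ) ^ (m + 1)) ^ s * (N : ℝ) ^ s := by
  have hN0 : (0 : ℝ) < N := by exact_mod_cast hN
  have hN1 : (1 : ℝ) ≤ N := by exact_mod_cast hN
  set P := (Finset.Ico N (2 * N)).filter Nat.Prime with hP
  rcases P.eq_empty_or_nonempty with he | ⟨q, hq⟩
  · rw [he]; simp only [Finset.card_empty, Nat.cast_zero]; positivity
  have hmem : ∀ p ∈ P, N ≤ p ∧ p < 2 * N ∧ p.Prime := by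
    intro p hp
    simp only [hP, Finset.mem_filter, Finset.mem_Ico] at hp
    exact ⟨hp.1.1, hp.1.2, hp.2⟩
  -- every point of the window lies in `(0, N^(-m)]`, so any of them can serve as the centre
  have hval : ∀ p ∈ P, 0 < 1 / (p : ℝ) ^ m ∧ 1 / (p : ℝ) ^ m ≤ 1 / (N : ℝ) ^ m := by
    intro p hp
    have hp1 : (N : ℝ) ≤ p := by exact_mod_cast (hmem p hp).1
    have hp0 : (0 : ℝ) < p := hN0.trans_le hp1
    constructor
    · positivity
    · gcongr
  have hratio : 1 / (N : ℝ) ^ m / (1 / (2 * N : ℝ) ^ (m + 1)) = (2 : ℝ) ^ (m + 1) * N := by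
    rw [Real.mul_rpow (by norm_num) hN0.le, Real.rpow_add hN0, Real.rpow_one]
    have : 0 < (N : ℝ) ^ m := Real.rpow_pos_of_pos hN0 m
    field_simp
  have hr0 : 0 < 1 / (2 * N : ℝ) ^ (m + 1) := by positivity
  have hrR : 1 / (2 * N : ℝ) ^ (m + 1) < 1 / (N : ℝ) ^ m := by
    rw [← one_lt_div hr0, hratio]
    have : 1 < (2 : ℝ) ^ (m + 1) := Real.one_lt_rpow (by norm_num) (by linarith)
    nlinarith
  obtain ⟨n, U, hU, hd, hn⟩ := H (1 / (N : ℝ) ^ m) (by positivity) _ hr0 hrR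
    (1 / (q : ℝ) ^ m) ⟨q, (hmem q hq).2.2, rfl⟩
  rw [hratio, Real.mul_rpow (by positivity) hN0.le, ← mul_assoc] at hn
  refine le_trans ?_ hn
  have hcov : ∀ p ∈ P, ∃ i, 1 / (p : ℝ) ^ m ∈ U i := by
    intro p hp
    refine Set.mem_iUnion.1 (hU ⟨?_, p, (hmem p hp).2.2, rfl⟩)
    rw [Metric.mem_closedBall, Real.dist_eq, abs_le]
    constructor <;> linarith [hval p hp, hval q hq]
  have hsep : ∀ a ∈ P, ∀ b ∈ P, ∀ i, 1 / (a : ℝ) ^ m ∈ U i → 1 / (b : ℝ) ^ m ∈ U i →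
      ¬ a < b := by
    intro a ha b hb i hai hbi hab
    have hgap := gap_lt hm (hmem a ha).1 hN hab (hmem b hb).2.1
    have h1 := (Metric.edist_le_ediam_of_mem hai hbi).trans (hd i)
    rw [edist_dist, ENNReal.ofReal_le_ofReal_iff hr0.le, Real.dist_eq] at h1
    exact absurd (le_abs_self _) (not_le.2 (h1.trans_lt hgap))
  have : Nonempty (Fin n) := ⟨(hcov q hq).choose⟩
  choose! f hf using hcov
  have hcard : P.card ≤ (Finset.univ : Finset (Fin n)).card := by
    refine Finset.card_le_card_of_injOn f (fun _ _ => Finset.mem_univ _) fun a ha b hb hab => ?_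
    exact le_antisymm
      (not_lt.1 (hsep b hb a ha (f b) (hf b hb) (hab ▸ hf a ha)))
      (not_lt.1 (hsep a ha b hb (f b) (hab ▸ hf a ha) (hf b hb)))
  simpa using hcard

/-- A power saving in the number of primes in dyadic windows would make the sum of the
reciprocals of the primes converge. -/
lemma summable_of_dyadic {B s : ℝ} (hB : 0 ≤ B) (hs : s < 1)
    (H : ∀ N : ℕ, 0 < N →
      (((Finset.Ico N (2 * N)).filter Nat.Prime).card : ℝ) ≤ B * (N : ℝ) ^ s) :
    Summable (Set.indicator {p : ℕ | p.Prime} (fun n : ℕ => (1 : ℝ) / n)) := by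
  set f := Set.indicator {p : ℕ | p.Prime} (fun n : ℕ => (1 : ℝ) / n) with hf
  have hf0 : ∀ n, 0 ≤ f n := fun n => Set.indicator_nonneg (fun _ _ => by positivity) n
  set q : ℝ := (2 : ℝ) ^ (s - 1) with hq
  have hq0 : 0 ≤ q := by positivity
  have hq1 : q < 1 := Real.rpow_lt_one_of_one_lt_of_neg (by norm_num) (by linarith)
  have hwindow : ∀ k : ℕ, ∑ n ∈ Finset.Ico (2 ^ k) (2 * 2 ^ k), f n ≤ B * q ^ k := by
    intro k
    have hk0 : (0 : ℝ) < ((2 ^ k : ℕ) : ℝ) := by positivity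
    calc ∑ n ∈ Finset.Ico (2 ^ k) (2 * 2 ^ k), f n
        = ∑ n ∈ (Finset.Ico (2 ^ k) (2 * 2 ^ k)).filter Nat.Prime, (1 : ℝ) / n := by
          rw [Finset.sum_filter]
          exact Finset.sum_congr rfl fun n _ => by simp [hf, Set.indicator_apply]
      _ ≤ ∑ n ∈ (Finset.Ico (2 ^ k) (2 * 2 ^ k)).filter Nat.Prime,
            1 / ((2 ^ k : ℕ) : ℝ) := by
          refine Finset.sum_le_sum fun n hn => ?_
          have : ((2 ^ k : ℕ) : ℝ) ≤ n := by
            exact_mod_cast (Finset.mem_Ico.1 (Finset.mem_filter.1 hn).1).1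
          exact one_div_le_one_div_of_le hk0 this
      _ = ((Finset.Ico (2 ^ k) (2 * 2 ^ k)).filter Nat.Prime).card
            * (1 / ((2 ^ k : ℕ) : ℝ)) := by
          rw [Finset.sum_const, nsmul_eq_mul]
      _ ≤ B * ((2 ^ k : ℕ) : ℝ) ^ s * (1 / ((2 ^ k : ℕ) : ℝ)) := by
          gcongr
          exact H _ (by positivity)
      _ = B * q ^ k := by
          rw [mul_assoc, mul_one_div, ← Real.rpow_sub_one hk0.ne', hq, Nat.cast_pow,
            Nat.cast_ofNat, Real.rpow_pow_comm (by norm_num)]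
  have hpartial : ∀ k : ℕ, ∑ n ∈ Finset.range (2 ^ k), f n ≤ ∑ j ∈ Finset.range k, B * q ^ j := by
    intro k
    induction k with
    | zero => simp [hf, Nat.not_prime_zero, Set.indicator_apply]
    | succ k ih =>
      rw [Finset.sum_range_succ, pow_succ', ← Finset.sum_range_add_sum_Ico f
        (show 2 ^ k ≤ 2 * 2 ^ k by omega)]
      exact add_le_add ih (hwindow k)
  have hgeom : Summable fun j : ℕ => B * q ^ j :=
    (summable_geometric_of_lt_one hq0 hq1).mul_left B
  refine summable_of_sum_range_le (c := ∑' j : ℕ, B * q ^ j) hf0 fun n => ?_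
  calc ∑ i ∈ Finset.range n, f i ≤ ∑ i ∈ Finset.range (2 ^ n), f i :=
        Finset.sum_le_sum_of_subset_of_nonneg
          (Finset.range_mono Nat.lt_two_pow_self.le) fun i _ _ => hf0 i
    _ ≤ _ := hpartial n
    _ ≤ _ := hgeom.sum_le_tsum _ fun j _ => by positivity

/-- For any real `m ≥ 1`, the set `{1/p^m : p prime}` has Assouad dimension 1. -/
theorem assouadDim_reciprocal_prime_powers (m : ℝ) (hm : 1 ≤ m) :
    assouadDim {x : ℝ | ∃ p : ℕ, p.Prime ∧ x = 1 / (p : ℝ) ^ m} = 1 := by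
  unfold assouadDim
  refine le_antisymm (csInf_le ⟨0, fun s hs => hs.1⟩ ?_) (le_csInf ⟨1, ?_⟩ ?_)
  · exact ⟨zero_le_one, 3, by norm_num, fun R _ r hr hrR x _ => one_mem_of_real _ hr hrR x⟩
  · exact ⟨zero_le_one, 3, by norm_num, fun R _ r hr hrR x _ => one_mem_of_real _ hr hrR x⟩
  · rintro s ⟨-, C, hC, H⟩
    by_contra! hs
    exact not_summable_one_div_on_primes
      (summable_of_dyadic (by positivity) hs fun N hN => card_primes_le hm hC H hN)
end

section
/- Let m ≥ 1 be a real number and let ℙ^m = {p^m : p prime} ⊆ ℝ. Then for all k ∈ ℕ and all ε > 0 there exist δ > 0, an arithmetic progression P of length k and gap length δ, and a subset E ⊆ ℙ^m such that the Hausdorff distance between E and P is at most εδ. -/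
/-!
The mechanism is a dimension argument. Suppose `F = ℙ^m` has no subset `ε δ`-close to an arithmetic
progression of length `k` and gap `δ`. Put `N = k M` with `1 / M ≤ ε`. Cutting any interval
into `N` equal cells, some cell must miss `F`: otherwise every `M`-th cell contributes a point, and
these points approximate a progression (`exists_empty_cell`). Iterating through `J` scales, an
interval of length `N ^ J * h` contains at most `(N - 1) ^ J` points of `F` that are pairwise
`h`-separated (`card_le_of_empty_cells`), a power saving over the trivial bound `N ^ J`.

The primes are too dense for this. By Chebyshev's bounds there are at least `n / log (4 n)` primes
in `(n, 4 n]` once `n` is large (`le_card_primes_mul_log`). Their `m`-th powers lie in an interval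
of length less than `4 ^ m * n ^ m` and are separated by at least `n ^ (m - 1)`
(`rpow_sub_one_le_sub`), so for `n = N ^ j` they number at most `(N - 1) ^ (j + c)` with `c`
independent of `j`. Since `j * (1 - 1 / N) ^ j → 0`, this is a contradiction for large `j`.
-/

open Set Metric Filter

/-- If no subset of `F` is `ε δ`-close to a progression of length `k` and gap `δ`, then any interval
cut into `k * M` cells of length `h`, where `1 ≤ ε * M`, has a cell disjoint from `F`. -/
lemma exists_empty_cell_s13 {F : Set ℝ} {k M : ℕ} {ε : ℝ} (hM : 0 < M) (hMε : 1 ≤ ε * M)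
    (hF : ¬ ∃ δ : ℝ, 0 < δ ∧ ∃ t : ℝ, ∃ E : Set ℝ, E ⊆ F ∧
      Metric.hausdorffEDist E (arithmeticProgression k δ t) ≤ ENNReal.ofReal (ε * δ))
    (t h : ℝ) (hh : 0 < h) :
    ∃ i < k * M, ∀ x ∈ F, t + i * h ≤ x → t + (i + 1) * h ≤ x := by
  by_contra! H
  apply hF
  have H' : ∀ j : ℕ, ∃ x : ℝ, j < k →
      x ∈ F ∧ t + (j * M) * h ≤ x ∧ x < t + (j * M + 1) * h := by
    intro j
    by_cases hj : j < k
    · obtain ⟨x, hx⟩ := H (j * M) (Nat.mul_lt_mul_of_pos_right hj hM)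
      exact ⟨x, fun _ => by simpa using hx⟩
    · exact ⟨0, fun h => absurd h hj⟩
  choose f hf using H'
  have hM' : (0 : ℝ) < M := by exact_mod_cast hM
  have key : ∀ j : ℕ, j < k →
      edist (f j) (t + (M * h) * j) ≤ ENNReal.ofReal (ε * (M * h)) := by
    intro j hj
    obtain ⟨-, h1, h2⟩ := hf j hj
    rw [edist_dist, Real.dist_eq]
    apply ENNReal.ofReal_le_ofReal
    rw [abs_le]
    constructor <;> nlinarith
  refine ⟨M * h, by positivity, t, f '' {j | j < k}, ?_, ?_⟩
  · rintro _ ⟨j, hj, rfl⟩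
    exact (hf j hj).1
  · apply Metric.hausdorffEDist_le_of_mem_edist
    · rintro _ ⟨j, hj, rfl⟩
      exact ⟨_, ⟨j, hj, rfl⟩, key j hj⟩
    · rintro _ ⟨j, hj, rfl⟩
      exact ⟨_, ⟨j, hj, rfl⟩, by rw [edist_comm]; exact key j hj⟩

/-- Multiscale count: if among any `N` consecutive cells of equal length one misses `F`, then
an interval of length `N ^ n * h` contains at most `(N - 1) ^ n` points of `F` with mutual
distances at least `h`. -/
lemma card_le_of_empty_cells {F : Set ℝ} {N : ℕ}
    (hF : ∀ t h : ℝ, 0 < h → ∃ i < N, ∀ x ∈ F, t + i * h ≤ x → t + (i + 1) * h ≤ x)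
    {h : ℝ} (hh : 0 < h) (n : ℕ) (t : ℝ) (S : Finset ℝ) (hSF : ∀ x ∈ S, x ∈ F)
    (hSt : ∀ x ∈ S, t ≤ x ∧ x < t + N ^ n * h)
    (hS : ∀ x ∈ S, ∀ y ∈ S, x < y → x + h ≤ y) :
    S.card ≤ (N - 1) ^ n := by
  induction n generalizing t S with
  | zero =>
    rw [pow_zero, Finset.card_le_one]
    intro a ha b hb
    have h1 := hSt a ha
    have h2 := hSt b hb
    rw [pow_zero, one_mul] at h1 h2
    rcases lt_trichotomy a b with hab | hab | hab
    · linarith [hS a ha b hb hab]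
    · exact hab
    · linarith [hS b hb a ha hab]
  | succ n ih =>
    have hN : 0 < N := by
      obtain ⟨i, hi, -⟩ := hF 0 1 one_pos
      omega
    have hN' : (0 : ℝ) < N := by exact_mod_cast hN
    have hH : (0 : ℝ) < N ^ n * h := by positivity
    obtain ⟨i₀, hi₀, hemp⟩ := hF t (N ^ n * h) hH
    set H : ℝ := N ^ n * h with hHdef
    have hNH : (N : ℝ) ^ (n + 1) * h = N * H := by rw [hHdef]; ring
    have hcell : ∀ x ∈ S, t + (⌊(x - t) / H⌋₊ : ℝ) * H ≤ x ∧
        x < t + ((⌊(x - t) / H⌋₊ : ℝ) + 1) * H := by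
      intro x hx
      have h0 : 0 ≤ (x - t) / H := div_nonneg (by linarith [(hSt x hx).1]) hH.le
      have h1 := Nat.floor_le h0
      have h2 := Nat.lt_floor_add_one ((x - t) / H)
      rw [le_div_iff₀ hH] at h1
      rw [div_lt_iff₀ hH] at h2
      constructor <;> linarith
    have hmaps : ∀ x ∈ S, ⌊(x - t) / H⌋₊ ∈ (Finset.range N).erase i₀ := by
      intro x hx
      rw [Finset.mem_erase, Finset.mem_range]
      constructor
      · intro he
        have h1 := hcell x hx
        rw [he] at h1
        linarith [hemp x (hSF x hx) h1.1]
      · rw [Nat.floor_lt (div_nonneg (by linarith [(hSt x hx).1]) hH.le), div_lt_iff₀ hH]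
        have := (hSt x hx).2
        rw [hNH] at this
        linarith
    have := Finset.card_le_mul_card_image_of_maps_to hmaps ((N - 1) ^ n) (by
      intro i _
      apply ih (t + i * H)
      · intro x hx
        exact hSF x (Finset.mem_filter.1 hx).1
      · intro x hx
        obtain ⟨hxS, rfl⟩ := Finset.mem_filter.1 hx
        have := hcell x hxS
        exact ⟨this.1, by linarith⟩
      · intro x hx y hy
        exact hS x (Finset.mem_filter.1 hx).1 y (Finset.mem_filter.1 hy).1)
    rwa [Finset.card_erase_of_mem (Finset.mem_range.2 hi₀), Finset.card_range,
      ← pow_succ] at this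

/-- Chebyshev's bounds `θ(4n) ≥ 4 n log 2 - o(n)` and `θ(n) ≤ 2 n log 2` give `θ(4n) - θ(n) ≥ n`,
whence many primes in `(n, 4n]`. -/
lemma le_card_primes_mul_log : ∀ᶠ n : ℕ in atTop,
    (n : ℝ) ≤ (((Finset.Ioc n (4 * n)).filter Nat.Prime).card : ℝ) * Real.log (4 * n) := by
  have hlim : Tendsto (fun n : ℕ => (4 * n : ℝ)) atTop atTop :=
    tendsto_natCast_atTop_atTop.const_mul_atTop (by norm_num)
  have e1 := hlim.eventually
    ((isLittleO_log_rpow_atTop (r := 1 / 4) (by norm_num)).bound one_pos)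
  have e2 := hlim.eventually
    (eventually_ge_atTop ((1000 : ℝ) ^ 4))
  filter_upwards [e1, e2] with n h1 h2
  have hx : (0 : ℝ) < 4 * n := lt_of_lt_of_le (by norm_num) h2
  -- `r` is the fourth root of `4 n`, so the Chebyshev error term is at most `2 * r ^ 3 + 2 * r`
  set r : ℝ := (4 * n : ℝ) ^ (1 / 4 : ℝ) with hr
  have hr0 : 0 < r := by positivity
  have hr4 : r ^ 4 = 4 * n := by
    rw [hr, ← Real.rpow_natCast, ← Real.rpow_mul hx.le]; norm_num
  have hr1000 : 1000 ≤ r := by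
    rw [← hr4] at h2
    exact le_of_pow_le_pow_left₀ (by norm_num) hr0.le h2
  have hlog : Real.log (4 * n) ≤ r := by
    have := (le_abs_self _).trans h1
    rwa [Real.norm_of_nonneg hr0.le, one_mul] at this
  have hsqrt : √(4 * n) = r ^ 2 := by
    rw [← hr4, show r ^ 4 = (r ^ 2) ^ 2 by ring, Real.sqrt_sq (by positivity)]
  have hlow := Chebyshev.theta_ge (4 * n)
  push_cast at hlow
  have hup := Chebyshev.theta_le_log4_mul_x (Nat.cast_nonneg (α := ℝ) n)
  have hlog4 : Real.log 4 = 2 * Real.log 2 := by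
    rw [show (4 : ℝ) = 2 ^ 2 by norm_num, Real.log_pow]; norm_num
  have hlog1 : Real.log (4 * n + 1) ≤ 2 * r := by
    have : Real.log (4 * n + 1) ≤ Real.log (2 * (4 * n)) :=
      Real.log_le_log (by positivity) (by nlinarith)
    rw [Real.log_mul (by norm_num) hx.ne'] at this
    linarith [Real.log_two_lt_d9]
  have herr : 2 * √(4 * n) * Real.log (4 * n) ≤ 2 * r ^ 3 := by
    rw [hsqrt]
    nlinarith [mul_le_mul_of_nonneg_left hlog (sq_nonneg r)]
  have hl2 := Real.log_two_gt_d9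
  have hdiff : (n : ℝ) ≤ Chebyshev.theta ((4 * n : ℕ) : ℝ) - Chebyshev.theta n := by
    push_cast
    have h3 : 1000 * r ^ 3 ≤ 4 * n := by
      rw [← hr4]; nlinarith [pow_pos hr0 3]
    have h4 : r ≤ r ^ 3 := by nlinarith [pow_pos hr0 2]
    have h5 : (0.69 : ℝ) * (2 * n) ≤ Real.log 2 * (2 * n) := by
      apply mul_le_mul_of_nonneg_right _ (by positivity); linarith
    rw [hlog4] at hup
    nlinarith
  have hsum : Chebyshev.theta ((4 * n : ℕ) : ℝ) - Chebyshev.theta n =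
      ∑ p ∈ (Finset.Ioc n (4 * n)).filter Nat.Prime, Real.log p := by
    rw [Chebyshev.theta, Chebyshev.theta, Nat.floor_natCast, Nat.floor_natCast, sub_eq_iff_eq_add,
      add_comm, ← Finset.sum_union]
    · rw [← Finset.filter_union, Finset.Ioc_union_Ioc_eq_Ioc (by omega) (by omega)]
    · apply Finset.disjoint_filter_filter
      rw [Finset.disjoint_left]
      intro a ha hb
      rw [Finset.mem_Ioc] at ha hb
      omega
  calc (n : ℝ) ≤ ∑ p ∈ (Finset.Ioc n (4 * n)).filter Nat.Prime, Real.log p := by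
        rw [← hsum]; exact hdiff
    _ ≤ _ := by
        rw [← nsmul_eq_mul]
        apply Finset.sum_le_card_nsmul
        intro p hp
        rw [Finset.mem_filter, Finset.mem_Ioc] at hp
        apply Real.log_le_log
        · exact_mod_cast hp.2.pos
        · exact_mod_cast hp.1.2

/-- Bernoulli's inequality makes the `m`-th powers of distinct integers above `n` separated by at
least `n ^ (m - 1)`. -/
lemma rpow_sub_one_le_sub {m : ℝ} (hm : 1 ≤ m) {n p q : ℕ} (hn : 0 < n) (hnp : n ≤ p)
    (hpq : p < q) : (p : ℝ) ^ m + (n : ℝ) ^ (m - 1) ≤ (q : ℝ) ^ m := by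
  have hp : (0 : ℝ) < p := by exact_mod_cast hn.trans_le hnp
  have h1 : (n : ℝ) ^ (m - 1) ≤ (p : ℝ) ^ (m - 1) :=
    Real.rpow_le_rpow (Nat.cast_nonneg _) (by exact_mod_cast hnp) (by linarith)
  have h2 : 1 + m * (1 / p : ℝ) ≤ (1 + 1 / p : ℝ) ^ m :=
    one_add_mul_self_le_rpow_one_add (by linarith [one_div_pos.2 hp]) hm
  have h3 : (p + 1 : ℝ) ^ m ≤ (q : ℝ) ^ m :=
    Real.rpow_le_rpow (by positivity) (by exact_mod_cast hpq) (by linarith)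
  have h4 : (p + 1 : ℝ) ^ m = p ^ m * (1 + 1 / p : ℝ) ^ m := by
    rw [← Real.mul_rpow hp.le (by positivity)]; congr 1; field_simp
  have h5 : (p : ℝ) ^ (m - 1) = p ^ m * (1 / p) := by
    rw [Real.rpow_sub_one hp.ne']; ring
  have h6 : (0 : ℝ) < p ^ m := by positivity
  have h7 : (1 / p : ℝ) ≤ m * (1 / p) := le_mul_of_one_le_left (by positivity) hm
  have h8 := mul_le_mul_of_nonneg_left ((add_le_add_right h7 1).trans h2) h6.le
  rw [mul_add, mul_one, ← h5, ← h4] at h8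
  linarith

/-- For real `m ≥ 1`, the set `ℙ^m = {p^m : p prime} ⊆ ℝ` asymptotically contains
arbitrarily long arithmetic progressions. -/
theorem prime_powers_asymp_APs (m : ℝ) (hm : 1 ≤ m) :
    ∀ k : ℕ, ∀ ε : ℝ, 0 < ε → ∃ δ : ℝ, 0 < δ ∧ ∃ t : ℝ, ∃ E : Set ℝ,
      E ⊆ {x : ℝ | ∃ p : ℕ, p.Prime ∧ x = (p : ℝ) ^ m} ∧
      EMetric.hausdorffEdist E (arithmeticProgression k δ t) ≤ ENNReal.ofReal (ε * δ) := by
  intro k ε hε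
  by_contra hcon
  obtain ⟨M, hM⟩ := exists_nat_gt (1 / ε)
  have hM0 : 0 < M := by
    have : (0 : ℝ) < M := (one_div_pos.2 hε).trans hM
    exact_mod_cast this
  have hMε : 1 ≤ ε * M := by
    rw [div_lt_iff₀ hε] at hM
    linarith
  have hcell := exists_empty_cell_s13 hM0 hMε hcon
  set N := k * M with hNdef
  have hN : 0 < N := by
    obtain ⟨i, hi, -⟩ := hcell 0 1 one_pos
    omega
  -- With `N = 1` the set would miss every interval, in particular one around `2 ^ m`.
  have hN2 : 2 ≤ N := by
    by_contra hlt
    obtain ⟨i, hi, hx⟩ := hcell ((2 : ℕ) ^ m) 1 one_pos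
    obtain rfl : i = 0 := by omega
    have := hx _ ⟨2, Nat.prime_two, rfl⟩ (by simp)
    simp at this
    linarith
  have hNR : (2 : ℝ) ≤ N := by exact_mod_cast hN2
  obtain ⟨c, hc⟩ := pow_unbounded_of_one_lt ((4 : ℝ) ^ m) (by linarith : (1 : ℝ) < N)
  have hcount : ∀ j : ℕ,
      ((Finset.Ioc (N ^ j) (4 * N ^ j)).filter Nat.Prime).card ≤ (N - 1) ^ (j + c) := by
    intro j
    have hn : 0 < N ^ j := by positivity
    have hnR : (0 : ℝ) < ((N ^ j : ℕ) : ℝ) := by exact_mod_cast hn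
    set n := N ^ j with hndef
    have hm0 : 0 < m := by linarith
    have hinj : Function.Injective (fun p : ℕ => (p : ℝ) ^ m) := by
      intro a b hab
      have := (Real.rpow_left_inj (Nat.cast_nonneg a) (Nat.cast_nonneg b) hm0.ne').1 hab
      exact_mod_cast this
    rw [← Finset.card_image_of_injective _ hinj]
    refine card_le_of_empty_cells hcell (h := (n : ℝ) ^ (m - 1)) (by positivity) (j + c)
      ((n : ℝ) ^ m) _ ?_ ?_ ?_
    · intro x hx
      obtain ⟨p, hp, rfl⟩ := Finset.mem_image.1 hx
      exact ⟨p, (Finset.mem_filter.1 hp).2, rfl⟩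
    · intro x hx
      obtain ⟨p, hp, rfl⟩ := Finset.mem_image.1 hx
      obtain ⟨hp1, hp2⟩ := Finset.mem_Ioc.1 (Finset.mem_filter.1 hp).1
      have hp1' : (n : ℝ) ≤ p := by exact_mod_cast hp1.le
      have hp2' : (p : ℝ) ≤ 4 * n := by exact_mod_cast hp2
      refine ⟨Real.rpow_le_rpow hnR.le hp1' hm0.le, ?_⟩
      have h1 : (p : ℝ) ^ m ≤ 4 ^ m * n ^ m := by
        rw [← Real.mul_rpow (by norm_num) hnR.le]
        exact Real.rpow_le_rpow (Nat.cast_nonneg _) hp2' hm0.le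
      have h2 : (N : ℝ) ^ (j + c) * (n : ℝ) ^ (m - 1) = N ^ c * n ^ m := by
        rw [Real.rpow_sub_one hnR.ne', pow_add, hndef]
        push_cast
        have : (N : ℝ) ^ j ≠ 0 := by positivity
        field_simp
      have h3 : (0 : ℝ) < (n : ℝ) ^ m := by positivity
      show (p : ℝ) ^ m < _
      rw [h2]
      nlinarith
    · intro x hx y hy hxy
      obtain ⟨p, hp, rfl⟩ := Finset.mem_image.1 hx
      obtain ⟨q, hq, rfl⟩ := Finset.mem_image.1 hy
      have hp1 := (Finset.mem_Ioc.1 (Finset.mem_filter.1 hp).1).1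
      have hpq : (p : ℝ) < q :=
        (Real.rpow_lt_rpow_iff (Nat.cast_nonneg _) (Nat.cast_nonneg _) hm0).1 hxy
      exact rpow_sub_one_le_sub hm hn hp1.le (by exact_mod_cast hpq)
  -- `r ^ j` is the saving from the empty cells; `log (4 N ^ j)` is only linear in `j`.
  set r : ℝ := (N - 1) / N with hr
  have hr0 : 0 ≤ r := div_nonneg (by linarith) (by linarith)
  have hr1 : r < 1 := by rw [hr, div_lt_one (by linarith)]; linarith
  have hlim : Tendsto (fun j : ℕ => ((N : ℝ) - 1) ^ c *
      (Real.log 4 * r ^ j + Real.log N * (j * r ^ j))) atTop (nhds 0) := by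
    have := (((tendsto_pow_atTop_nhds_zero_of_lt_one hr0 hr1).const_mul (Real.log 4)).add
      ((tendsto_self_mul_const_pow_of_lt_one hr0 hr1).const_mul (Real.log N))).const_mul
        (((N : ℝ) - 1) ^ c)
    simpa using this
  have hpow : Tendsto (fun j : ℕ => N ^ j) atTop atTop :=
    tendsto_pow_atTop_atTop_of_one_lt (by omega)
  obtain ⟨j, hj1, hj2⟩ := ((hlim.eventually (gt_mem_nhds one_pos)).and
    (hpow.eventually le_card_primes_mul_log)).exists
  have hNj : (0 : ℝ) < (N : ℝ) ^ j := by positivity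
  have hcard : (((Finset.Ioc (N ^ j) (4 * N ^ j)).filter Nat.Prime).card : ℝ) ≤
      ((N : ℝ) - 1) ^ (j + c) := by
    have h := hcount j
    have h' : (((Finset.Ioc (N ^ j) (4 * N ^ j)).filter Nat.Prime).card : ℝ) ≤
      (((N - 1) ^ (j + c) : ℕ) : ℝ) := by exact_mod_cast h
    rwa [Nat.cast_pow, Nat.cast_sub (by omega), Nat.cast_one] at h'
  push_cast at hj2
  have hlog : Real.log (4 * (N : ℝ) ^ j) = Real.log 4 + j * Real.log N := by
    rw [Real.log_mul (by norm_num) hNj.ne', Real.log_pow]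
  have hlog0 : 0 ≤ Real.log 4 + j * Real.log N := by
    have := Real.log_nonneg (by linarith : (1 : ℝ) ≤ N)
    have := Real.log_nonneg (by norm_num : (1 : ℝ) ≤ 4)
    positivity
  rw [hlog] at hj2
  have hfin := hj2.trans (mul_le_mul_of_nonneg_right hcard hlog0)
  have hrj : ((N : ℝ) - 1) ^ j = r ^ j * N ^ j := by
    rw [hr, div_pow, div_mul_cancel₀ _ hNj.ne']
  rw [pow_add, hrj] at hfin
  have hmul := mul_lt_mul_of_pos_right hj1 hNj
  nlinarith
end

section
/- Let F ⊆ ℕ be a large set, that is, a set of positive integers with Σ_{a ∈ F} 1/a = ∞. Then the set {1/x : x ∈ F} ⊆ ℝ has Assouad dimension equal to 1. -/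
/-!
The set `{1/a : a ∈ F}` lies in `ℝ`, and a ball of radius `R` in `ℝ` is covered by at most `3 R / r`
intervals of length `r`, so the dimension is at most `1` (`one_mem_assouad_exponents`).

Conversely, let `s < 1` be an admissible exponent with constant `C`. The points `1/a` with
`a ∈ F ∩ [2^k, 2^(k+1))` lie in a common ball of radius `2^(-k)` and are pairwise more than
`1/4^(k+1)` apart, so a set of diameter at most `1/4^(k+1)` contains at most one of them. Hence the
dyadic block contains at most `C (2^(k+2))^s` elements of `F` (`card_dyadic_block_le`), and
`∑ 1/a ≤ ∑ₖ 2^(-k) C (2^(k+2))^s`, a geometric series of ratio `2^(s-1) < 1`. This contradicts the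
divergence of `∑ 1/a`.
-/

open Set Metric Filter

/-- A ball of radius `R` in `ℝ` is covered by `⌈2R/r⌉ ≤ 3R/r` intervals of length `r`, so `1` is an
admissible exponent, with constant `3`, for every subset of `ℝ`. -/
lemma one_mem_assouad_exponents (E : Set ℝ) (R : ℝ) (hR : 0 < R) (r : ℝ) (hr : 0 < r)
    (hrR : r < R) (x : ℝ) : ∃ N : ℕ, ∃ U : Fin N → Set ℝ,
      (Metric.closedBall x R ∩ E ⊆ ⋃ i, U i) ∧
      (∀ i, EMetric.diam (U i) ≤ ENNReal.ofReal r) ∧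
      (N : ℝ) ≤ 3 * (R / r) ^ (1 : ℝ) := by
  have h1 : 1 < R / r := (one_lt_div hr).2 hrR
  -- `⌊2R/r⌋ + 1` rather than the ceiling, so that the right endpoint `x + R` is also covered
  refine ⟨⌊2 * R / r⌋₊ + 1, fun i => Set.Icc (x - R + i * r) (x - R + i * r + r), ?_, ?_, ?_⟩
  · rintro y ⟨hy, -⟩
    rw [Metric.mem_closedBall, Real.dist_eq, abs_le] at hy
    have h0 : 0 ≤ (y - (x - R)) / r := div_nonneg (by linarith) hr.le
    have hle : (y - (x - R)) / r ≤ 2 * R / r := by gcongr; linarith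
    refine Set.mem_iUnion.2 ⟨⟨⌊(y - (x - R)) / r⌋₊, ?_⟩, ?_⟩
    · exact Nat.lt_succ_of_le (Nat.floor_mono hle)
    · have ha := Nat.floor_le h0
      have hb := (Nat.lt_floor_add_one ((y - (x - R)) / r)).le
      rw [le_div_iff₀ hr] at ha
      rw [div_le_iff₀ hr] at hb
      constructor <;> simp only <;> linarith
  · intro i
    simp only [EMetric.diam, Real.ediam_Icc]
    exact ENNReal.ofReal_le_ofReal (by linarith)
  · have h2 : 0 ≤ 2 * R / r := by positivity
    have := Nat.floor_le h2
    rw [mul_div_assoc] at this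
    rw [Real.rpow_one]
    push_cast
    rw [mul_div_assoc]
    linarith

/-- If the reciprocals of `F` satisfy the covering condition with exponent `s` and constant `C`,
then the dyadic block `F ∩ [2^k, 2^(k+1))` has at most `C (2^(k+2))^s` elements. -/
lemma card_dyadic_block_le (F : Set ℕ) (h0 : 0 ∉ F) (s C : ℝ) (hC : 0 < C)
    (h : ∀ R : ℝ, 0 < R → ∀ r : ℝ, 0 < r → r < R →
      ∀ x ∈ {x : ℝ | ∃ a ∈ F, x = 1 / (a : ℝ)}, ∃ N : ℕ, ∃ U : Fin N → Set ℝ,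
        (Metric.closedBall x R ∩ {x : ℝ | ∃ a ∈ F, x = 1 / (a : ℝ)} ⊆ ⋃ i, U i) ∧
        (∀ i, EMetric.diam (U i) ≤ ENNReal.ofReal r) ∧
        (N : ℝ) ≤ C * (R / r) ^ s) (k : ℕ) :
    ∃ N : ℕ, ENat.card ((fun a : F => Nat.log 2 (a : ℕ)) ⁻¹' {k}) ≤ N ∧
      (N : ℝ) ≤ C * ((2 : ℝ) ^ (k + 2)) ^ s := by
  rcases isEmpty_or_nonempty ((fun a : F => Nat.log 2 (a : ℕ)) ⁻¹' {k}) with he | ⟨⟨a₀, ha₀⟩⟩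
  · exact ⟨0, by rw [ENat.card_eq_zero_iff_empty _ |>.2 he]; simp, by push_cast; positivity⟩
  have key : ∀ b ∈ ((fun a : F => Nat.log 2 (a : ℕ)) ⁻¹' {k}),
      (2 : ℝ) ^ k ≤ (b : ℕ) ∧ ((b : ℕ) : ℝ) < 2 ^ (k + 1) := by
    rintro ⟨b, hbF⟩ hb
    have hb0 : b ≠ 0 := fun h => h0 (h ▸ hbF)
    have hb : Nat.log 2 b = k := hb
    have := (Nat.log_eq_iff (Or.inr ⟨one_lt_two, hb0⟩)).1 hb
    exact ⟨by exact_mod_cast this.1, by exact_mod_cast this.2⟩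
  have hp : (0 : ℝ) < 2 ^ k := by positivity
  have h1p : (1 : ℝ) ≤ 2 ^ k := one_le_pow₀ one_le_two
  obtain ⟨N, U, hcov, hdiam, hN⟩ := h (1 / 2 ^ k) (by positivity) (1 / (4 * (2 ^ k * 2 ^ k)))
    (by positivity) (one_div_lt_one_div_of_lt hp (by nlinarith)) (1 / ((a₀ : ℕ) : ℝ))
    ⟨a₀, a₀.2, rfl⟩
  refine ⟨N, ?_, ?_⟩
  · have hmem : ∀ b : ((fun a : F => Nat.log 2 (a : ℕ)) ⁻¹' {k}),
        ∃ i, 1 / (((b : F) : ℕ) : ℝ) ∈ U i := by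
      rintro ⟨b, hb⟩
      refine Set.mem_iUnion.1 (hcov ⟨?_, b, b.2, rfl⟩)
      have hb1 := one_div_le_one_div_of_le hp (key b hb).1
      have hb2 := one_div_le_one_div_of_le hp (key a₀ ha₀).1
      have hb3 : 0 ≤ 1 / (((b : F) : ℕ) : ℝ) := by positivity
      have hb4 : 0 ≤ 1 / (((a₀ : F) : ℕ) : ℝ) := by positivity
      rw [Metric.mem_closedBall, Real.dist_eq, abs_le]
      constructor <;> simp only <;> linarith
    choose f hf using hmem
    have hinj : Function.Injective f := by
      -- two distinct points of the block are too far apart to share a covering set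
      have hlt : ∀ b c : ((fun a : F => Nat.log 2 (a : ℕ)) ⁻¹' {k}),
          f b = f c → ¬ ((b : F) : ℕ) < ((c : F) : ℕ) := by
        intro b c hbc hlt
        have hd : edist (1 / (((b : F) : ℕ) : ℝ)) (1 / (((c : F) : ℕ) : ℝ)) ≤
            ENNReal.ofReal (1 / (4 * (2 ^ k * 2 ^ k))) :=
          (Metric.edist_le_ediam_of_mem (hf b) (hbc ▸ hf c)).trans (hdiam _)
        rw [edist_dist, ENNReal.ofReal_le_ofReal_iff (by positivity), Real.dist_eq] at hd
        obtain ⟨hb1, hb2⟩ := key b b.2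
        obtain ⟨hc1, hc2⟩ := key c c.2
        have hlt' : (((b : F) : ℕ) : ℝ) + 1 ≤ ((c : F) : ℕ) := by exact_mod_cast hlt
        generalize (((b : F) : ℕ) : ℝ) = u at *
        generalize (((c : F) : ℕ) : ℝ) = v at *
        have hu : 0 < u := by linarith
        have hv : 0 < v := by linarith
        have hd := (le_abs_self _).trans hd
        rw [div_sub_div _ _ hu.ne' hv.ne'] at hd
        rw [pow_succ] at hb2 hc2
        have huv : u * v < 4 * (2 ^ k * 2 ^ k) := by nlinarith
        have h1 := one_div_lt_one_div_of_lt (mul_pos hu hv) huv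
        have h2 : 1 / (u * v) ≤ (1 * v - u * 1) / (u * v) := by gcongr; linarith
        linarith
      intro b c hbc
      exact Subtype.ext (Subtype.ext
        (le_antisymm (not_lt.1 (hlt c b hbc.symm)) (not_lt.1 (hlt b c hbc))))
    simpa using ENat.card_le_card_of_injective hinj
  · have hR : (1 / 2 ^ k : ℝ) / (1 / (4 * (2 ^ k * 2 ^ k))) = 2 ^ (k + 2) := by
      rw [pow_add]; field_simp; norm_num
    rwa [hR] at hN

/-- If `{1/x : x ∈ F}` satisfies the covering condition with an exponent `s < 1`, then the
reciprocals of the elements of `F` are summable. -/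
lemma tsum_reciprocals_ne_top (F : Set ℕ) (h0 : 0 ∉ F) (s C : ℝ) (hs : s < 1) (hC : 0 < C)
    (h : ∀ R : ℝ, 0 < R → ∀ r : ℝ, 0 < r → r < R →
      ∀ x ∈ {x : ℝ | ∃ a ∈ F, x = 1 / (a : ℝ)}, ∃ N : ℕ, ∃ U : Fin N → Set ℝ,
        (Metric.closedBall x R ∩ {x : ℝ | ∃ a ∈ F, x = 1 / (a : ℝ)} ⊆ ⋃ i, U i) ∧
        (∀ i, EMetric.diam (U i) ≤ ENNReal.ofReal r) ∧
        (N : ℝ) ≤ C * (R / r) ^ s) :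
    ∑' a : F, (1 : ENNReal) / ((a : ℕ) : ENNReal) ≠ ⊤ := by
  have hsum : Summable fun k : ℕ => C * ((2 : ℝ) ^ (k + 2)) ^ s * (1 / 2 ^ k) := by
    have hr : (2 : ℝ) ^ s / 2 < 1 := by
      rw [div_lt_one two_pos]
      simpa using Real.rpow_lt_rpow_of_exponent_lt one_lt_two hs
    refine ((summable_geometric_of_lt_one (by positivity) hr).mul_left
      (C * ((2 : ℝ) ^ s) ^ 2)).congr fun k => ?_
    rw [← Real.rpow_natCast_mul two_pos.le, mul_comm ((k + 2 : ℕ) : ℝ),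
      Real.rpow_mul_natCast two_pos.le, div_pow, pow_add]
    ring
  refine ne_top_of_le_ne_top hsum.tsum_ofReal_ne_top ?_
  rw [← ENNReal.tsum_fiberwise _ (fun a : F => Nat.log 2 (a : ℕ))]
  refine ENNReal.tsum_le_tsum fun k => ?_
  obtain ⟨N, hcard, hN⟩ := card_dyadic_block_le F h0 s C hC h k
  calc _ ≤ ∑' _ : ((fun a : F => Nat.log 2 (a : ℕ)) ⁻¹' {k}), ENNReal.ofReal (1 / 2 ^ k) := by
        refine ENNReal.tsum_le_tsum ?_
        rintro ⟨⟨b, hbF⟩, hb⟩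
        have hb0 : b ≠ 0 := fun h => h0 (h ▸ hbF)
        have hb : Nat.log 2 b = k := hb
        have hle : 2 ^ k ≤ b := hb ▸ Nat.pow_log_le_self 2 hb0
        have hle' : (2 : ENNReal) ^ k ≤ b := by exact_mod_cast hle
        rw [ENNReal.ofReal_div_of_pos (by positivity), ENNReal.ofReal_pow two_pos.le]
        simpa using hle'
    _ = (ENat.card ((fun a : F => Nat.log 2 (a : ℕ)) ⁻¹' {k}) : ENNReal) *
          ENNReal.ofReal (1 / 2 ^ k) := ENNReal.tsum_const _
    _ ≤ ENNReal.ofReal N * ENNReal.ofReal (1 / 2 ^ k) := by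
        gcongr
        rw [ENNReal.ofReal_natCast]
        exact_mod_cast ENat.toENNReal_le.2 hcard
    _ ≤ _ := by
        rw [← ENNReal.ofReal_mul (by positivity)]
        gcongr

/-- If `F ⊆ ℕ` is a large set (of positive integers whose reciprocals sum to infinity),
then `{1/x : x ∈ F}` has Assouad dimension 1. -/
theorem assouadDim_reciprocals_of_large (F : Set ℕ) (h0 : 0 ∉ F)
    (hlarge : ∑' a : F, (1 : ENNReal) / ((a : ℕ) : ENNReal) = ⊤) :
    assouadDim {x : ℝ | ∃ a ∈ F, x = 1 / (a : ℝ)} = 1 := by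
  have hmem : (1 : ℝ) ∈ {s : ℝ | 0 ≤ s ∧ ∃ C : ℝ, 0 < C ∧ ∀ R : ℝ, 0 < R → ∀ r : ℝ, 0 < r → r < R →
      ∀ x ∈ {x : ℝ | ∃ a ∈ F, x = 1 / (a : ℝ)}, ∃ N : ℕ, ∃ U : Fin N → Set ℝ,
        (Metric.closedBall x R ∩ {x : ℝ | ∃ a ∈ F, x = 1 / (a : ℝ)} ⊆ ⋃ i, U i) ∧
        (∀ i, EMetric.diam (U i) ≤ ENNReal.ofReal r) ∧
        (N : ℝ) ≤ C * (R / r) ^ s} :=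
    ⟨zero_le_one, 3, by norm_num, fun R hR r hr hrR x _ =>
      one_mem_assouad_exponents _ R hR r hr hrR x⟩
  refine le_antisymm (csInf_le ⟨0, fun s hs => hs.1⟩ hmem) (le_csInf ⟨1, hmem⟩ ?_)
  rintro s ⟨-, C, hC, h⟩
  by_contra! hs
  exact tsum_reciprocals_ne_top F h0 s C hs hC h hlarge
end

section
/- Let F ⊆ ℕ be a large set, that is, a set of positive integers with Σ_{a ∈ F} 1/a = ∞. Then for all k ∈ ℕ and all ε > 0 there exist δ > 0, an arithmetic progression P of length k and gap length δ, and a subset E ⊆ F (regarded as a subset of ℝ) such that the Hausdorff distance between E and P is at most εδ. -/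
/-!
If `F` misses every approximate progression of length `k + 1` with relative error `1 / m`, then
`F` is thin at all scales. Cut a block of length `N ^ (n + 1)`, where `N = (k + 1) * m`, into `N`
blocks of length `ℓ = N ^ n`. For each residue `r < m`, the blocks whose index is `≡ r (mod m)` start
along a progression of length `k + 1` and gap `m * ℓ`, so if all of them met `F` there would be an
approximate progression with error `ℓ`, i.e. relative error `1 / m`. Hence at most `K = k * m`
of the `N` blocks meet `F`, and by induction `F` has at most `K ^ n` elements in any block of length
`N ^ n` (`card_block_le`). Since `K < N`, the elements between `N ^ n` and `N ^ (n + 1)` contribute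
at most `K * (K / N) ^ n` to the sum of reciprocals, and this geometric series converges
(`tsum_inv_ne_top_of_card_le`), so `F` is not large.
-/

open Set Metric Filter

open Classical in
/-- Counting elements of `F` in `N`-adic blocks, when among any `k + 1` intervals of length `ℓ`
starting along a progression of gap `m * ℓ` at least one misses `F`. -/
lemma card_block_le (F : Set ℕ) (k m : ℕ) (hm : 0 < m)
    (H : ∀ l c : ℕ, 0 < l → ∃ q, q < k + 1 ∧
      ∀ a ∈ F, ¬ (c + q * m * l ≤ a ∧ a < c + q * m * l + l)) (n b : ℕ) :
    ((Finset.Ico b (b + ((k + 1) * m) ^ n)).filter (· ∈ F)).card ≤ (k * m) ^ n := by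
  induction n generalizing b with
  | zero => exact (Finset.card_filter_le _ _).trans (by simp)
  | succ n ih =>
    set l := ((k + 1) * m) ^ n with hl
    have hlpos : 0 < l := by positivity
    let B : ℕ → ℕ → Finset ℕ := fun r q =>
      (Finset.Ico (b + r * l + q * m * l) (b + r * l + q * m * l + l)).filter (· ∈ F)
    have hsub : (Finset.Ico b (b + ((k + 1) * m) ^ (n + 1))).filter (· ∈ F) ⊆
        (Finset.range m).biUnion fun r => (Finset.range (k + 1)).biUnion fun q => B r q := by
      intro x hx
      simp only [Finset.mem_filter, Finset.mem_Ico] at hx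
      obtain ⟨⟨hbx, hxlt⟩, hxF⟩ := hx
      obtain ⟨y, rfl⟩ := Nat.exists_eq_add_of_le hbx
      rw [pow_succ, ← hl] at hxlt
      have hy : y < (k + 1) * m * l := by linarith
      have hj : y / l < (k + 1) * m := (Nat.div_lt_iff_lt_mul hlpos).2 hy
      have h1 := Nat.div_add_mod y l
      have h2 := Nat.mod_lt y hlpos
      have h3 := Nat.div_add_mod (y / l) m
      have h4 : y / l * l = (y / l) % m * l + (y / l) / m * m * l := by
        conv_lhs => rw [← h3]
        ring
      have h5 : l * (y / l) = y / l * l := mul_comm _ _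
      simp only [Finset.mem_biUnion, Finset.mem_range, B, Finset.mem_filter, Finset.mem_Ico]
      exact ⟨(y / l) % m, Nat.mod_lt _ hm, (y / l) / m, (Nat.div_lt_iff_lt_mul hm).2 hj,
        ⟨by omega, by omega⟩, hxF⟩
    have hr : ∀ r ∈ Finset.range m,
        ((Finset.range (k + 1)).biUnion fun q => B r q).card ≤ k * (k * m) ^ n := by
      intro r _
      obtain ⟨q₀, hq₀, hempty⟩ := H l (b + r * l) hlpos
      have h0 : (B r q₀).card = 0 := by
        rw [Finset.card_eq_zero, Finset.filter_eq_empty_iff]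
        intro a ha haF
        exact hempty a haF (Finset.mem_Ico.1 ha)
      refine Finset.card_biUnion_le.trans ?_
      rw [← Finset.sum_erase (f := fun q => (B r q).card) _ h0]
      refine (Finset.sum_le_card_nsmul _ _ ((k * m) ^ n) fun q _ => ih _).trans ?_
      rw [Finset.card_erase_of_mem (Finset.mem_range.2 hq₀)]
      simp
    calc _ ≤ _ := Finset.card_le_card hsub
      _ ≤ _ := Finset.card_biUnion_le
      _ ≤ _ := Finset.sum_le_card_nsmul _ _ _ hr
      _ = (k * m) ^ (n + 1) := by simp; ring

open Classical in
/-- A set of positive integers with at most `K ^ n` elements below `N ^ n`, where `K < N`, has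
a convergent sum of reciprocals. -/
lemma tsum_inv_ne_top_of_card_le (F : Set ℕ) (h0 : 0 ∉ F) (K N : ℕ) (hN : 1 < N) (hKN : K < N)
    (hcard : ∀ n, ((Finset.range (N ^ n)).filter (· ∈ F)).card ≤ K ^ n) :
    ∑' a : F, (1 : ENNReal) / ((a : ℕ) : ENNReal) ≠ ⊤ := by
  have hN0 : (N : ENNReal) ≠ 0 := by simp; omega
  have hterm : ∀ a : F, (1 : ENNReal) / ((a : ℕ) : ENNReal) ≤
      ∑' n : ℕ, if (a : ℕ) < N ^ (n + 1) then ((N : ENNReal) ^ n)⁻¹ else 0 := by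
    intro a
    have ha : (a : ℕ) ≠ 0 := fun h => h0 (h ▸ a.2)
    refine le_trans ?_ (ENNReal.le_tsum (Nat.log N a))
    rw [if_pos (Nat.lt_pow_succ_log_self hN _), one_div, ENNReal.inv_le_inv]
    exact_mod_cast Nat.pow_log_le_self N ha
  have hblock : ∀ n : ℕ,
      (∑' a : F, if (a : ℕ) < N ^ (n + 1) then ((N : ENNReal) ^ n)⁻¹ else 0) ≤
        K * ((K : ENNReal) / N) ^ n := by
    intro n
    rw [tsum_subtype F (fun a : ℕ => if a < N ^ (n + 1) then ((N : ENNReal) ^ n)⁻¹ else 0),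
      tsum_eq_sum (s := (Finset.range (N ^ (n + 1))).filter (· ∈ F))]
    · refine (Finset.sum_le_card_nsmul _ _ ((N : ENNReal) ^ n)⁻¹ ?_).trans ?_
      · intro a _
        simp only [Set.indicator_apply]
        split_ifs <;> simp
      · rw [nsmul_eq_mul]
        have hc : ((((Finset.range (N ^ (n + 1))).filter (· ∈ F)).card : ℕ) : ENNReal) ≤
            (K : ENNReal) ^ (n + 1) := by exact_mod_cast hcard (n + 1)
        calc _ ≤ (K : ENNReal) ^ (n + 1) * ((N : ENNReal) ^ n)⁻¹ := by gcongr
          _ = _ := by rw [div_eq_mul_inv, mul_pow, ENNReal.inv_pow]; ring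
    · intro a ha
      simp only [Finset.mem_filter, Finset.mem_range, not_and] at ha
      simp only [Set.indicator_apply]
      split_ifs with h1 h2
      · exact absurd h1 (ha h2)
      · rfl
      · rfl
  have hratio : (K : ENNReal) / N < 1 := by
    rw [ENNReal.div_lt_iff (Or.inl hN0) (Or.inl (by simp)), one_mul]
    exact_mod_cast hKN
  refine ne_top_of_le_ne_top ?_ ((ENNReal.tsum_le_tsum hterm).trans
    (ENNReal.tsum_comm.le.trans (ENNReal.tsum_le_tsum hblock)))
  rw [ENNReal.tsum_mul_left, ENNReal.tsum_geometric]
  exact ENNReal.mul_ne_top (by simp) (ENNReal.inv_ne_top.2 (tsub_pos_of_lt hratio).ne')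

/-- Weak Erdős–Turán: if `F ⊆ ℕ` is a large set (of positive integers whose reciprocals
sum to infinity), then `F` asymptotically contains arbitrarily long arithmetic
progressions. -/
theorem large_set_asymp_APs (F : Set ℕ) (h0 : 0 ∉ F)
    (hlarge : ∑' a : F, (1 : ENNReal) / ((a : ℕ) : ENNReal) = ⊤) :
    ∀ k : ℕ, ∀ ε : ℝ, 0 < ε → ∃ δ : ℝ, 0 < δ ∧ ∃ t : ℝ, ∃ E : Set ℝ,
      E ⊆ (fun n : ℕ => (n : ℝ)) '' F ∧
      EMetric.hausdorffEdist E (arithmeticProgression k δ t) ≤ ENNReal.ofReal (ε * δ) := by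
  classical
  intro k ε hε
  obtain ⟨m₀, hm₀⟩ := exists_nat_gt (1 / ε)
  -- The shift by `2` makes the base `(k + 1) * m` exceed `1`.
  set m := m₀ + 2 with hmdef
  have hm : 0 < m := by omega
  have hmε : 1 ≤ ε * m := by
    have h : 1 / ε ≤ m := by rw [hmdef]; push_cast; linarith
    rw [div_le_iff₀ hε] at h
    linarith
  obtain ⟨l, c, hl, hlc⟩ : ∃ l c : ℕ, 0 < l ∧ ∀ q < k + 1,
      ∃ a ∈ F, c + q * m * l ≤ a ∧ a < c + q * m * l + l := by
    by_contra! hno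
    refine tsum_inv_ne_top_of_card_le F h0 (k * m) ((k + 1) * m) (by lia) (by lia)
      (fun n => ?_) hlarge
    have H := card_block_le F k m hm (fun l c hl => ?_) n 0
    · rwa [zero_add, ← Finset.range_eq_Ico] at H
    · obtain ⟨q, hq, h⟩ := hno l c hl
      exact ⟨q, hq, fun a ha hh => absurd hh.2 (not_lt.2 (h a ha hh.1))⟩
  choose! f hfF hf₁ hf₂ using hlc
  have hlR : (0 : ℝ) < l := by exact_mod_cast hl
  have hdist : ∀ q < k, edist (f q : ℝ) (c + (m * l : ℝ) * q) ≤ ENNReal.ofReal (ε * (m * l)) := by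
    intro q hq
    have h₁ : (c + q * m * l : ℝ) ≤ f q := by exact_mod_cast hf₁ q (by omega)
    have h₂ : (f q : ℝ) < c + q * m * l + l := by exact_mod_cast hf₂ q (by omega)
    rw [edist_dist]
    refine ENNReal.ofReal_le_ofReal ?_
    rw [Real.dist_eq, abs_le]
    constructor <;> nlinarith
  refine ⟨m * l, by positivity, c, (fun q => (f q : ℝ)) '' {q | q < k}, ?_, ?_⟩
  · rintro _ ⟨q, hq, rfl⟩
    exact ⟨f q, hfF q (Nat.lt_succ_of_lt hq), rfl⟩
  · refine Metric.hausdorffEDist_le_of_mem_edist ?_ ?_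
    · rintro _ ⟨q, hq, rfl⟩
      exact ⟨_, ⟨q, hq, rfl⟩, hdist q hq⟩
    · rintro _ ⟨q, hq, rfl⟩
      exact ⟨_, ⟨q, hq, rfl⟩, by rw [edist_comm]; exact hdist q hq⟩
end

section
/- Every large set F ⊆ ℕ, that is, every set of positive integers with Σ_{a ∈ F} 1/a = ∞, has Assouad dimension equal to 1 when regarded as a subset of ℝ. -/
/-!
The dimension is at most `1` because an interval of length `2R` is covered by `⌊2R/r⌋ + 1 ≤ 3R/r`
intervals of length `r`.

For the lower bound, let `s` be admissible in the definition of the Assouad dimension with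
constant `C`. A set of diameter at most `1/2` contains at most one integer, so covering
`F ∩ [2^k, 2^(k+1))`, which lies in a ball of radius `2^k` centred at any of its points, by sets
of diameter `1/2` shows that this block has at most `C * (2^(k+1))^s` elements. Each of
their reciprocals is at most `2^(-k)`, so the reciprocals of `F` sum to at most
`∑ k, C * 2^s * (2^(s-1))^k`, which is finite if `s < 1`.
-/

open Set Metric Filter

/-- Any subset of the real line satisfies the Assouad covering condition with exponent `1`. -/
lemma assouad_cover_one (A : Set ℝ) :
    ∃ C : ℝ, 0 < C ∧ ∀ R : ℝ, 0 < R → ∀ r : ℝ, 0 < r → r < R →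
    ∀ x ∈ A, ∃ N : ℕ, ∃ U : Fin N → Set ℝ,
      (Metric.closedBall x R ∩ A ⊆ ⋃ i, U i) ∧
      (∀ i, EMetric.diam (U i) ≤ ENNReal.ofReal r) ∧
      (N : ℝ) ≤ C * (R / r) ^ (1 : ℝ) := by
  refine ⟨3, by norm_num, fun R hR r hr hrR x _ => ⟨⌊2 * R / r⌋₊ + 1,
    fun i => Set.Icc (x - R + i * r) (x - R + (i + 1) * r), ?_, ?_, ?_⟩⟩
  · rintro y ⟨hy, -⟩
    rw [Real.closedBall_eq_Icc] at hy
    obtain ⟨hy1, hy2⟩ := hy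
    have hnn : 0 ≤ (y - (x - R)) / r := div_nonneg (by linarith) hr.le
    have hle : (y - (x - R)) / r ≤ 2 * R / r := by gcongr; linarith
    have h1 := Nat.floor_le hnn
    have h2 := Nat.lt_floor_add_one ((y - (x - R)) / r)
    rw [le_div_iff₀ hr] at h1
    rw [div_lt_iff₀ hr] at h2
    refine Set.mem_iUnion.2 ⟨⟨⌊(y - (x - R)) / r⌋₊, Nat.lt_succ_of_le (Nat.floor_le_floor hle)⟩,
      ?_, ?_⟩ <;> simp only <;> linarith
  · intro i
    change Metric.ediam _ ≤ _
    rw [Real.ediam_Icc]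
    apply ENNReal.ofReal_le_ofReal
    linarith
  · have h1 := Nat.floor_le (a := 2 * R / r) (by positivity)
    have h2 : 1 ≤ R / r := (one_le_div hr).2 hrR.le
    rw [Real.rpow_one]
    push_cast
    rw [mul_div_assoc] at *
    linarith

/-- If finitely many sets of diameter at most `1/2` cover a set of naturals, then they are at
least as many as the elements of that set. -/
lemma card_le_of_cover (S : Finset ℕ) (N : ℕ) (U : Fin N → Set ℝ)
    (hcov : ∀ n ∈ S, ∃ i, (n : ℝ) ∈ U i)
    (hdiam : ∀ i, EMetric.diam (U i) ≤ ENNReal.ofReal (1 / 2)) : S.card ≤ N := by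
  choose f hf using hcov
  have hinj : Function.Injective (fun n : S => f n.1 n.2) := by
    rintro ⟨a, ha⟩ ⟨b, hb⟩ hab
    have hab' : f a ha = f b hb := hab
    have h1 := hf a ha
    rw [hab'] at h1
    have hd : edist (a : ℝ) (b : ℝ) ≤ ENNReal.ofReal (1 / 2) :=
      (Metric.edist_le_ediam_of_mem h1 (hf b hb)).trans (hdiam _)
    rw [edist_dist, ENNReal.ofReal_le_ofReal_iff (by norm_num), Nat.dist_cast_real] at hd
    by_contra hne
    have := Nat.pairwise_one_le_dist (fun h => hne (Subtype.ext h) : a ≠ b)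
    linarith
  simpa using Fintype.card_le_of_injective _ hinj

/-- Every large set `F ⊆ ℕ` (of positive integers whose reciprocals sum to infinity)
has Assouad dimension 1 when regarded as a subset of `ℝ`. -/
theorem assouadDim_of_large (F : Set ℕ) (h0 : 0 ∉ F)
    (hlarge : ∑' a : F, (1 : ENNReal) / ((a : ℕ) : ENNReal) = ⊤) :
    assouadDim ((fun n : ℕ => (n : ℝ)) '' F) = 1 := by
  classical
  apply le_antisymm
  · exact csInf_le ⟨0, fun s hs => hs.1⟩ ⟨zero_le_one, assouad_cover_one _⟩
  refine le_csInf ⟨1, zero_le_one, assouad_cover_one _⟩ ?_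
  rintro s ⟨hs0, C, hC, H⟩
  by_contra! hs1
  let S : ℕ → Finset ℕ := fun k => (Finset.Ico (2 ^ k) (2 ^ (k + 1))).filter (· ∈ F)
  have hcard : ∀ k, ((S k).card : ℝ) ≤ C * (2 ^ (k + 1)) ^ s := by
    intro k
    rcases (S k).eq_empty_or_nonempty with he | ⟨m, hm⟩
    · rw [he]
      simp only [Finset.card_empty, Nat.cast_zero]
      positivity
    have hmem : ∀ n ∈ S k, (2 : ℝ) ^ k ≤ n ∧ (n : ℝ) < 2 ^ (k + 1) ∧ n ∈ F := by
      intro n hn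
      simp only [S, Finset.mem_filter, Finset.mem_Ico] at hn
      exact ⟨by exact_mod_cast hn.1.1, by exact_mod_cast hn.1.2, hn.2⟩
    have hk : (1 : ℝ) ≤ 2 ^ k := one_le_pow₀ (by norm_num)
    obtain ⟨N, U, hcov, hdiam, hN⟩ := H (2 ^ k) (by positivity) (1 / 2) (by norm_num)
      (by linarith) m ⟨m, (hmem m hm).2.2, rfl⟩
    have hSN : (S k).card ≤ N := by
      refine card_le_of_cover _ N U (fun n hn => ?_) hdiam
      refine Set.mem_iUnion.1 (hcov ⟨?_, n, (hmem n hn).2.2, rfl⟩)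
      have h1 := hmem n hn
      have h2 := hmem m hm
      rw [pow_succ] at h1 h2
      rw [Metric.mem_closedBall, Real.dist_eq, abs_le]
      constructor <;> linarith
    have he : (2 : ℝ) ^ k / (1 / 2) = 2 ^ (k + 1) := by rw [pow_succ]; ring
    rw [he] at hN
    exact (by exact_mod_cast hSN : ((S k).card : ℝ) ≤ N).trans hN
  have hblock : ∀ k, ∑ n ∈ S k, (1 : ENNReal) / (n : ENNReal)
      ≤ ENNReal.ofReal (C * 2 ^ s * ((2 : ℝ) ^ (s - 1)) ^ k) := by
    intro k
    have hterm : ∀ n ∈ S k, (1 : ENNReal) / (n : ENNReal) ≤ ENNReal.ofReal ((2 ^ k)⁻¹) := by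
      intro n hn
      simp only [S, Finset.mem_filter, Finset.mem_Ico] at hn
      rw [one_div, ENNReal.ofReal_inv_of_pos (by positivity)]
      apply ENNReal.inv_le_inv.2
      rw [ENNReal.ofReal_pow (by norm_num)]
      simp only [ENNReal.ofReal_ofNat]
      exact_mod_cast hn.1.1
    refine (Finset.sum_le_card_nsmul _ _ _ hterm).trans ?_
    rw [nsmul_eq_mul, ← ENNReal.ofReal_natCast, ← ENNReal.ofReal_mul (by positivity)]
    apply ENNReal.ofReal_le_ofReal
    have h2 : (C * (2 ^ (k + 1)) ^ s) * ((2 : ℝ) ^ k)⁻¹ = C * 2 ^ s * ((2 : ℝ) ^ (s - 1)) ^ k := by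
      rw [Real.rpow_sub_one (by norm_num), div_pow, pow_succ,
        Real.mul_rpow (by positivity) (by norm_num), ← Real.rpow_natCast_mul (by norm_num),
        ← Real.rpow_mul_natCast (by norm_num), mul_comm (k : ℝ) s]
      ring
    rw [← h2]
    exact mul_le_mul_of_nonneg_right (hcard k) (by positivity)
  have hq : (2 : ℝ) ^ (s - 1) < 1 :=
    Real.rpow_lt_one_of_one_lt_of_neg (by norm_num) (by linarith)
  have hsum : Summable fun k : ℕ => C * 2 ^ s * ((2 : ℝ) ^ (s - 1)) ^ k :=
    (summable_geometric_of_lt_one (by positivity) hq).mul_left _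
  have hfin : ∑' k, ENNReal.ofReal (C * 2 ^ s * ((2 : ℝ) ^ (s - 1)) ^ k) ≠ ⊤ :=
    hsum.tsum_ofReal_ne_top
  apply hfin
  rw [eq_top_iff, ← hlarge]
  calc ∑' a : F, (1 : ENNReal) / ((a : ℕ) : ENNReal)
      ≤ ∑' a : ⋃ k, (S k : Set ℕ), (1 : ENNReal) / ((a : ℕ) : ENNReal) := by
        refine ENNReal.tsum_mono_subtype (fun n : ℕ => (1 : ENNReal) / (n : ENNReal)) ?_
        intro a ha
        have ha0 : a ≠ 0 := fun h => h0 (h ▸ ha)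
        refine Set.mem_iUnion.2 ⟨Nat.log 2 a, ?_⟩
        simp only [S, Finset.coe_filter, Finset.mem_Ico, Set.mem_setOf_eq]
        exact ⟨⟨Nat.pow_log_le_self 2 ha0, Nat.lt_pow_succ_log_self (by norm_num) a⟩, ha⟩
    _ ≤ ∑' k, ∑' a : (S k : Set ℕ), (1 : ENNReal) / ((a : ℕ) : ENNReal) :=
        ENNReal.tsum_iUnion_le_tsum (fun n : ℕ => (1 : ENNReal) / (n : ENNReal)) _
    _ ≤ _ := by
        refine ENNReal.tsum_le_tsum fun k => ?_
        refine le_trans (le_of_eq ?_) (hblock k)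
        exact Finset.tsum_subtype' (S k) (fun n : ℕ => (1 : ENNReal) / (n : ENNReal))
end

section
/- The set of prime numbers, regarded as a subset of ℝ, has Assouad dimension equal to 1. -/
/-!
Both bounds are covering-number estimates. Any interval of length `2R` is covered by at most
`3R/r` intervals of length `r < R`, so every subset of `ℝ` has Assouad dimension at most `1`.
Conversely, cover the primes in `B(2, n)` at scale `1/2`: each covering set holds at most one prime,
so an admissible exponent `s` forces `π n ≤ C (2n)^s`. Chebyshev's lower bound `Chebyshev.pi_ge`
says that `π n` has order at least `n / log n`, which rules out `s < 1`.
-/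

open Set Metric Filter

open Asymptotics in
/-- The prime counting function has no upper bound of the form `C (2n)^s` with `s < 1`. -/
lemma one_le_of_primeCounting_le {s C : ℝ} (hs : 0 ≤ s) (hC : 0 < C)
    (h : ∀ n : ℕ, 2 ≤ n → (n.primeCounting : ℝ) ≤ C * (2 * n) ^ s) : 1 ≤ s := by
  by_contra! hs1
  set K : ℝ := C * 2 ^ s + 2 with hK
  have hKpos : 0 < K := by positivity
  have hlog2 : 0 < Real.log 2 := Real.log_pos (by norm_num)
  -- The constant makes `K * n ^ s * log n` at most half of `n * log 2`.
  have ho := (isLittleO_log_rpow_atTop (sub_pos.mpr hs1)).bound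
    (show 0 < Real.log 2 / (2 * K) by positivity)
  obtain ⟨n, hn, hn2⟩ := ((tendsto_natCast_atTop_atTop.eventually ho).and
    (eventually_ge_atTop 2)).exists
  have hn2' : (2 : ℝ) ≤ n := by exact_mod_cast hn2
  have hn0 : (0 : ℝ) < n := by linarith
  have hlogn : 0 < Real.log n := Real.log_pos (by linarith)
  rw [Real.norm_of_nonneg hlogn.le, Real.norm_of_nonneg (by positivity)] at hn
  have h1 := Chebyshev.pi_ge n
  rw [div_le_iff₀ hlogn] at h1
  have h2 := mul_le_mul_of_nonneg_right (h n hn2) hlogn.le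
  rw [Real.mul_rpow (by norm_num) hn0.le] at h2
  have h3 : Real.log (n + 1) ≤ 2 * Real.log n := by
    rw [show 2 * Real.log n = Real.log ((n : ℝ) ^ 2) by simp]
    exact Real.log_le_log (by linarith) (by nlinarith)
  have h4 : (1 : ℝ) ≤ (n : ℝ) ^ s := Real.one_le_rpow (by linarith) hs
  have h5 : Real.log n ≤ (n : ℝ) ^ s * Real.log n := le_mul_of_one_le_left hlogn.le h4
  have h6 : n * Real.log 2 ≤ K * ((n : ℝ) ^ s * Real.log n) := by rw [hK]; linarith
  have h7 : (n : ℝ) ^ s * (n : ℝ) ^ (1 - s) = n := by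
    rw [← Real.rpow_add hn0]; simp
  have h8 : K * ((n : ℝ) ^ s * Real.log n) ≤ n * Real.log 2 / 2 := by
    calc K * ((n : ℝ) ^ s * Real.log n)
        ≤ K * ((n : ℝ) ^ s * (Real.log 2 / (2 * K) * (n : ℝ) ^ (1 - s))) := by gcongr
      _ = ((n : ℝ) ^ s * (n : ℝ) ^ (1 - s)) * Real.log 2 / 2 := by field_simp
      _ = n * Real.log 2 / 2 := by rw [h7]
  have : 0 < n * Real.log 2 := by positivity
  linarith

/-- A cover by sets of diameter at most `1/2` separates the integers, so covering the primes in
`B(2, n)` takes at least `π n` sets. -/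
lemma primeCounting_le_of_cover {n N : ℕ} (U : Fin N → Set ℝ)
    (hU : closedBall (2 : ℝ) n ∩ {x : ℝ | ∃ p : ℕ, p.Prime ∧ x = (p : ℝ)} ⊆ ⋃ i, U i)
    (hd : ∀ i, EMetric.diam (U i) ≤ ENNReal.ofReal (1 / 2)) : n.primeCounting ≤ N := by
  have hex : ∀ p ∈ Nat.primesLE n, ∃ i, (p : ℝ) ∈ U i := by
    intro p hp
    have hpp := Nat.prime_of_mem_primesLE hp
    have hpn : p ≤ n := (Nat.mem_primesLE.mp hp).1
    have h2 : (2 : ℝ) ≤ p := by exact_mod_cast hpp.two_le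
    have hpn' : (p : ℝ) ≤ n := by exact_mod_cast hpn
    refine mem_iUnion.mp (hU ⟨?_, p, hpp, rfl⟩)
    rw [mem_closedBall, Real.dist_eq, abs_of_nonneg] <;> linarith
  choose f hf using hex
  rw [← Nat.primesLE_card_eq_primeCounting, ← Fintype.card_coe]
  refine (Fintype.card_le_of_injective (fun p : Nat.primesLE n => f p.1 p.2) ?_).trans_eq
    (Fintype.card_fin N)
  rintro ⟨p, hp⟩ ⟨q, hq⟩ hpq
  have hp' := hf p hp
  have hq' := hf q hq
  simp only at hpq
  rw [← hpq] at hq'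
  have hdist := (Metric.edist_le_ediam_of_mem hp' hq').trans (hd _)
  rw [edist_dist, ENNReal.ofReal_le_ofReal_iff (by norm_num), Nat.dist_cast_real, Nat.dist_eq]
    at hdist
  have hlt : |(p : ℤ) - q| < 1 := by
    have : |(p : ℝ) - q| < 1 := by linarith
    exact_mod_cast this
  have := Int.abs_lt_one_iff.mp hlt
  exact Subtype.ext (by simp only; omega)

/-- The covering estimate for balls in `ℝ`, which gives dimension at most `1`. -/
lemma exists_cover_closedBall (F : Set ℝ) {R r : ℝ} (hr : 0 < r) (hrR : r < R) (x : ℝ) :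
    ∃ N : ℕ, ∃ U : Fin N → Set ℝ, (closedBall x R ∩ F ⊆ ⋃ i, U i) ∧
      (∀ i, EMetric.diam (U i) ≤ ENNReal.ofReal r) ∧ (N : ℝ) ≤ 3 * (R / r) ^ (1 : ℝ) := by
  have hR : 0 < R := hr.trans hrR
  refine ⟨⌊2 * R / r⌋₊ + 1, fun i => Icc (x - R + i * r) (x - R + i * r + r), ?_, ?_, ?_⟩
  · rintro y ⟨hy, -⟩
    rw [Real.closedBall_eq_Icc] at hy
    have h0 : 0 ≤ (y - (x - R)) / r := div_nonneg (by linarith [hy.1]) hr.le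
    have hle : ⌊(y - (x - R)) / r⌋₊ ≤ ⌊2 * R / r⌋₊ := by
      gcongr
      linarith [hy.2]
    have h1 := Nat.floor_le h0
    have h2 := Nat.lt_floor_add_one ((y - (x - R)) / r)
    rw [le_div_iff₀ hr] at h1
    rw [div_lt_iff₀ hr] at h2
    refine mem_iUnion.mpr ⟨⟨_, Nat.lt_succ_of_le hle⟩, ?_, ?_⟩
    · simp only; linarith
    · simp only; linarith
  · intro i
    refine (Real.ediam_Icc _ _).trans_le ?_
    simp
  · have h1 : (1 : ℝ) ≤ R / r := (one_le_div hr).mpr hrR.le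
    have h2 := Nat.floor_le (show 0 ≤ 2 * R / r by positivity)
    rw [mul_div_assoc] at h2
    rw [Real.rpow_one, mul_div_assoc]
    push_cast
    linarith

/-- The set of prime numbers, regarded as a subset of `ℝ`, has Assouad dimension 1. -/
theorem assouadDim_primes :
    assouadDim {x : ℝ | ∃ p : ℕ, p.Prime ∧ x = (p : ℝ)} = 1 := by
  refine IsLeast.csInf_eq ⟨⟨zero_le_one, 3, by norm_num, ?_⟩, ?_⟩
  · intro R _ r hr hrR x _
    exact exists_cover_closedBall _ hr hrR x
  · rintro s ⟨hs, C, hC, H⟩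
    refine one_le_of_primeCounting_le hs hC fun n hn => ?_
    have hn' : (2 : ℝ) ≤ n := by exact_mod_cast hn
    obtain ⟨N, U, hU, hd, hN⟩ := H n (by linarith) (1 / 2) (by norm_num) (by linarith) 2
      ⟨2, Nat.prime_two, by norm_num⟩
    have hπ : (n.primeCounting : ℝ) ≤ N := by
      exact_mod_cast primeCounting_le_of_cover U hU hd
    rw [show (n : ℝ) / (1 / 2) = 2 * n by ring] at hN
    exact hπ.trans hN
end

section
/- For every constant C > 0 there exists K ∈ ℕ such that the following holds: for every sequence (p_k) of positive reals satisfying k^5 ≤ p_k ≤ k^5 + C·k^{21/8} for all k ≥ 1, and for every k ≥ K, one has (1/p_k − 1/p_{k+1}) ≥ (1/p_{k+1} − 1/p_{k+2}); that is, the gaps of the sequence (1/p_k) are eventually decreasing. -/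
/-!
The sequence `k ↦ k ^ (-5)` is convex with second difference about `30 k ^ (-7)`. Raising `p k`
from `k ^ 5` by at most `C * k ^ (21/8)` lowers `1 / p k` by at most `C * k ^ (-59/8)`, which is of
smaller order. Once `C ≤ k ^ (3/8)`, the perturbation `C * k ^ (21/8)` is at most `k ^ 3`
(`perturbation_le_cube`), and even this cruder bound on the two outer terms keeps the second
difference nonnegative, as `30 - 2 > 0` (`two_div_le_of_cube_perturbation`).
-/

open Set Metric Filter

/-- The perturbation is at most `k ^ 3` as soon as `k ≥ C ^ (8/3)`. -/
lemma perturbation_le_cube {C x : ℝ} (hC : 0 < C) (hx : 0 < x) (h : C ^ ((8 : ℝ) / 3) ≤ x) :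
    C * x ^ ((21 : ℝ) / 8) ≤ x ^ 3 := by
  have h1 : C ≤ x ^ ((3 : ℝ) / 8) := by
    calc C = (C ^ ((8 : ℝ) / 3)) ^ ((3 : ℝ) / 8) := by
          rw [← Real.rpow_mul hC.le]; norm_num
      _ ≤ x ^ ((3 : ℝ) / 8) := by gcongr
  calc C * x ^ ((21 : ℝ) / 8) ≤ x ^ ((3 : ℝ) / 8) * x ^ ((21 : ℝ) / 8) := by gcongr
    _ = x ^ 3 := by
      rw [← Real.rpow_add hx, ← Real.rpow_natCast]; norm_num

/-- The second-difference inequality for `x ^ (-5)` survives enlarging the outer denominators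
by the cube of their base. -/
lemma two_div_le_of_cube_perturbation {x : ℝ} (hx : 1 ≤ x) :
    2 / (x + 1) ^ 5 ≤ 1 / (x ^ 5 + x ^ 3) + 1 / ((x + 2) ^ 5 + (x + 2) ^ 3) := by
  obtain ⟨t, ht, rfl⟩ : ∃ t : ℝ, 0 ≤ t ∧ x = t + 1 := ⟨x - 1, by linarith, by ring⟩
  rw [div_add_div _ _ (by positivity) (by positivity),
    div_le_div_iff₀ (by positivity) (by positivity), ← sub_nonneg]
  -- In powers of `t = x - 1` all coefficients of the difference are nonnegative.
  ring_nf
  positivity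

/-- For every `C > 0` there is `K` such that for every sequence of positive reals with
`k^5 ≤ p k ≤ k^5 + C * k^(21/8)` for `k ≥ 1`, the gaps of `(1 / p k)` are decreasing
from `K` onwards. -/
theorem reciprocal_gaps_eventually_decreasing (C : ℝ) (hC : 0 < C) :
    ∃ K : ℕ, ∀ p : ℕ → ℝ, (∀ k : ℕ, 0 < p k) →
      (∀ k : ℕ, 1 ≤ k →
        (k : ℝ) ^ 5 ≤ p k ∧ p k ≤ (k : ℝ) ^ 5 + C * (k : ℝ) ^ ((21 : ℝ) / 8)) →
      ∀ k : ℕ, K ≤ k →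
        1 / p (k + 1) - 1 / p (k + 2) ≤ 1 / p k - 1 / p (k + 1) := by
  obtain ⟨N, hN⟩ := exists_nat_ge (C ^ ((8 : ℝ) / 3))
  refine ⟨max N 1, fun p hp hb k hk => ?_⟩
  have hk1 : 1 ≤ k := le_trans (le_max_right _ _) hk
  have hNk : N ≤ k := le_trans (le_max_left _ _) hk
  have hx : (1 : ℝ) ≤ k := by exact_mod_cast hk1
  -- Lower bound for the outer terms, valid at every index `j ≥ k`.
  have low : ∀ j : ℕ, k ≤ j → 1 / ((j : ℝ) ^ 5 + (j : ℝ) ^ 3) ≤ 1 / p j := fun j hj => by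
    have hNj : (N : ℝ) ≤ j := by exact_mod_cast hNk.trans hj
    have hj0 : (0 : ℝ) < j := by exact_mod_cast hk1.trans hj
    exact one_div_le_one_div_of_le (hp j) ((hb j (hk1.trans hj)).2.trans
      (by gcongr; exact perturbation_le_cube hC hj0 (hN.trans hNj)))
  have h0 := low k le_rfl
  have h2 := low (k + 2) (by omega)
  have h1 : 1 / p (k + 1) ≤ 1 / ((k + 1 : ℕ) : ℝ) ^ 5 :=
    one_div_le_one_div_of_le (by positivity) (hb (k + 1) (by omega)).1
  push_cast at h1 h2
  have key := two_div_le_of_cube_perturbation hx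
  have e : (2 : ℝ) / ((k : ℝ) + 1) ^ 5 = 2 * (1 / ((k : ℝ) + 1) ^ 5) := by ring
  linarith
end
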